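/- arXiv:1404.3821 — 3 statements merged into one kernel-verified Lean document; each statement's English description precedes it below -/
import Mathlib

section
/- Let 𝓓 = (Ω, 𝓑) be a β(i) design with parameter (v, k, d), where i ≥ 9, v ≥ 2k and d > 0. If 𝓓 is also a β(i−1) design, then 2(i−1) ≤ k−d ≤ 2i+4. -/
open Finset

variable {α : Type*} [Fintype α] [DecidableEq α]

/-- `𝓑` is a design on the finite type `α` of cardinality `v`, with block size `k` and
maximal pairwise block intersection size `d`. -/
def IsDesign (𝓑 : Finset (Finset α)) (v k d : ℕ) : Prop :=
  Fintype.card α = v ∧ 2 ≤ 𝓑.card ∧ d < k ∧ k < v ∧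
  (∀ B ∈ 𝓑, B.card = k) ∧
  (∀ B ∈ 𝓑, ∀ C ∈ 𝓑, B ≠ C → (B ∩ C).card ≤ d) ∧
  (∃ B ∈ 𝓑, ∃ C ∈ 𝓑, B ≠ C ∧ (B ∩ C).card = d)

/-- `𝓑` is a `β(i)` design with parameters `(v, k, d)`: a design such that
`1 ≤ i ≤ (v - d + 1)/2` and every `(d + 2i - 1)`-element subset `X` of `Ω` admits a
unique block `B` with `|X ∩ B| ≥ d + i`. -/
def IsBetaDesign (𝓑 : Finset (Finset α)) (v k d i : ℕ) : Prop :=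
  IsDesign 𝓑 v k d ∧ 1 ≤ i ∧ 2 * i ≤ v - d + 1 ∧
  ∀ X : Finset α, X.card = d + 2 * i - 1 →
    ∃! B, B ∈ 𝓑 ∧ d + i ≤ (X ∩ B).card


lemma bd_chooseR (n j : ℕ) : ((j:ℝ)+1) * (n.choose (j+1) : ℝ) = ((n:ℝ) - j) * (n.choose j : ℝ) := by
  rcases le_or_gt j n with h | h
  · have := Nat.choose_succ_right_eq n j
    have h2 : ((n.choose (j+1) * (j+1) : ℕ):ℝ) = ((n.choose j * (n - j) : ℕ):ℝ) := by rw [this]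
    push_cast [h] at h2
    linarith
  · rw [Nat.choose_eq_zero_of_lt h, Nat.choose_eq_zero_of_lt (by omega : n < j+1)]; simp

lemma bd_count_eq (B : Finset α) (s l : ℕ) (hl : l ≤ s) :
    #{X : Finset α | X.card = s ∧ (X ∩ B).card = s - l} =
      B.card.choose (s - l) * (Fintype.card α - B.card).choose l := by
  rw [← Finset.card_compl, ← Finset.card_powersetCard, ← Finset.card_powersetCard (n := l),
    ← Finset.card_product]
  refine Finset.card_bij' (fun X _ => (X ∩ B, X \ B)) (fun P _ => P.1 ∪ P.2) ?_ ?_ ?_ ?_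
  · intro X hX
    simp only [mem_filter, mem_univ, true_and] at hX
    have := Finset.card_inter_add_card_sdiff X B
    simp only [mem_product, mem_powersetCard]
    refine ⟨⟨inter_subset_right, hX.2⟩, ?_, by omega⟩
    intro x hx; simp at hx ⊢; exact hx.2
  · rintro ⟨Y, Z⟩ h
    simp only [mem_product, mem_powersetCard] at h
    obtain ⟨⟨h1, h2⟩, h3, h4⟩ := h
    have hd : Disjoint Y Z := by
      rw [Finset.disjoint_left]; intro x hx hz
      have := h3 hz; simp at this; exact this (h1 hx)
    have : (Y ∪ Z) ∩ B = Y := by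
      ext x
      simp only [mem_inter, mem_union]
      constructor
      · rintro ⟨h | h, hb⟩
        · exact h
        · have := h3 h; simp at this; exact absurd hb this
      · intro h; exact ⟨Or.inl h, h1 h⟩
    simp only [mem_filter, mem_univ, true_and, this, card_union_of_disjoint hd]
    omega
  · intro X _
    ext x; simp; tauto
  · rintro ⟨Y, Z⟩ h
    simp only [mem_product, mem_powersetCard] at h
    obtain ⟨⟨h1, h2⟩, h3, h4⟩ := h
    have h5 : ∀ x ∈ Z, x ∉ B := fun x hx => by have := h3 hx; simpa using this
    ext x
    · simp; constructor
      · rintro ⟨h | h, hb⟩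
        · exact h
        · exact absurd hb (h5 x h)
      · intro h; exact ⟨Or.inl h, h1 h⟩
    · simp; constructor
      · rintro ⟨h | h, hb⟩
        · exact absurd (h1 h) hb
        · exact h
      · intro h; exact ⟨Or.inr h, h5 x h⟩

lemma bd_count_ge (B : Finset α) (s L : ℕ) (hL : L ≤ s) :
    #{X : Finset α | X.card = s ∧ s - L ≤ (X ∩ B).card} =
      ∑ l ∈ range (L+1), B.card.choose (s - l) * (Fintype.card α - B.card).choose l := by
  rw [Finset.sum_congr rfl (fun l hl => (bd_count_eq B s l (by simp at hl; omega)).symm)]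
  rw [← Finset.card_biUnion]
  · congr 1
    ext X
    simp only [mem_filter, mem_univ, true_and, mem_biUnion, mem_range]
    constructor
    · rintro ⟨h1, h2⟩
      have := Finset.card_le_card (inter_subset_left : X ∩ B ⊆ X)
      exact ⟨s - (X ∩ B).card, by omega, h1, by omega⟩
    · rintro ⟨l, h1, h2, h3⟩
      exact ⟨h2, by omega⟩
  · intro x hx y hy hxy
    simp at hx hy
    rw [Function.onFun, Finset.disjoint_left]
    intro X h1 h2
    simp at h1 h2
    omega

lemma bd_total (𝓑 : Finset (Finset α)) (k s L : ℕ) (hL : L ≤ s) (hk : ∀ B ∈ 𝓑, B.card = k)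
    (h : ∀ X : Finset α, X.card = s → ∃! B, B ∈ 𝓑 ∧ s - L ≤ (X ∩ B).card) :
    𝓑.card * ∑ l ∈ range (L+1), k.choose (s - l) * (Fintype.card α - k).choose l =
      (Fintype.card α).choose s := by
  have h1 : ∑ B ∈ 𝓑, #{X : Finset α | X.card = s ∧ s - L ≤ (X ∩ B).card} =
      𝓑.card * ∑ l ∈ range (L+1), k.choose (s - l) * (Fintype.card α - k).choose l := by
    rw [Finset.sum_congr rfl (g := fun _ => ∑ l ∈ range (L+1), k.choose (s - l) * (Fintype.card α - k).choose l)]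
    · simp
    · intro B hB
      rw [bd_count_ge B s L hL, hk B hB]
  rw [← h1]
  have h2 : ∀ B ∈ 𝓑, #{X : Finset α | X.card = s ∧ s - L ≤ (X ∩ B).card} =
      ∑ X ∈ powersetCard s (univ : Finset α), if s - L ≤ (X ∩ B).card then 1 else 0 := by
    intro B _
    rw [← Finset.card_filter]
    congr 1
    ext X; simp [mem_powersetCard]
  rw [Finset.sum_congr rfl h2, Finset.sum_comm]
  rw [Finset.sum_congr rfl (g := fun _ => 1)]
  · simp
  · intro X hX
    rw [mem_powersetCard] at hX
    obtain ⟨B, hB, hu⟩ := h X hX.2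
    rw [← Finset.card_filter, Finset.card_eq_one]
    refine ⟨B, ?_⟩
    ext C
    simp only [mem_filter, mem_singleton]
    constructor
    · intro hC; exact hu C hC
    · rintro rfl; exact hB

lemma bd_rec (k V s L : ℕ) (h : L + 1 ≤ s) :
    ((s:ℝ)+1)*(s+2) * ∑ l ∈ range (L+2), (k.choose (s+2-l) : ℝ) * V.choose l =
    ((k:ℝ)+V-s)*(k+V-s-1) * ∑ l ∈ range (L+1), (k.choose (s-l) : ℝ) * V.choose l
    + ((k:ℝ)-s+L+1)*(k-s+L) * (k.choose (s-L-1) * V.choose (L+1))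
    - ((V:ℝ)-L)*(V-L-1) * (k.choose (s-L) * V.choose L) := by
  induction L with
  | zero =>
    obtain ⟨j, rfl⟩ : ∃ j, s = j + 1 := ⟨s-1, by omega⟩
    simp [Finset.sum_range_succ]
    have a1 := bd_chooseR k j
    have a2 := bd_chooseR k (j+1)
    have a3 := bd_chooseR k (j+2)
    push_cast at *
    simp only [add_assoc] at *
    norm_num at *
    linear_combination ((j:ℝ)+2)*a3 + (((k:ℝ)-j-2) + (j+3)*V) * a2 + (V:ℝ)*(k-j-1)*a1
  | succ L ih =>
    obtain ⟨j, rfl⟩ : ∃ j, s = j + L + 2 := ⟨s-L-2, by omega⟩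
    have ih := ih (by omega)
    rw [Finset.sum_range_succ _ (L+2), mul_add, ih, Finset.sum_range_succ _ (L+1)]
    have e1 : j + L + 2 + 2 - (L+2) = j + 2 := by omega
    have e2 : j + L + 2 - (L+1) = j + 1 := by omega
    have e3 : j + L + 2 - (L+1) - 1 = j := by omega
    have e4 : j + L + 2 - L = j + 2 := by omega
    have e5 : j + L + 2 - L - 1 = j + 1 := by omega
    rw [e1, e2, e4]
    simp only [show j + 2 - 1 = j + 1 by omega, show j + 1 - 1 = j by omega, show L + 1 + 1 = L + 2 by omega]
    have a1 := bd_chooseR k j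
    have a2 := bd_chooseR k (j+1)
    have b1 := bd_chooseR V L
    have b2 := bd_chooseR V (L+1)
    simp only [show j + 1 + 1 = j + 2 by omega, show L + 1 + 1 = L + 2 by omega] at *
    push_cast at *
    generalize (k.choose j : ℝ) = A0 at *
    generalize (k.choose (j+1) : ℝ) = A1 at *
    generalize (k.choose (j+2) : ℝ) = A2 at *
    generalize (V.choose L : ℝ) = V0 at *
    generalize (V.choose (L+1) : ℝ) = V1 at *
    generalize (V.choose (L+2) : ℝ) = V2 at *
    have c1 : ((k:ℝ)-j)*(k-j-1)*A0 = (j+1)*(j+2)*A2 := by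
      linear_combination -((k:ℝ)-j-1)*a1 - ((j:ℝ)+1)*a2
    have c2 : ((V:ℝ)-L)*(V-L-1)*V0 = (L+1)*(L+2)*V2 := by
      linear_combination -((V:ℝ)-L-1)*b1 - ((L:ℝ)+1)*b2
    have c3 : ((k:ℝ)-j-1)*(V-L-1)*(A1*V1) = (j+2)*(L+2)*(A2*V2) := by
      linear_combination -((V:ℝ)-L-1)*V1*a2 - ((j:ℝ)+2)*A2*b2
    linear_combination -V2*c1 - A2*c2 - 2*c3

lemma bd_main_eq (k V v s L b : ℕ) (hv : v = k + V) (h : L + 1 ≤ s)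
    (h1 : b * ∑ l ∈ range (L+1), k.choose (s - l) * V.choose l = v.choose s)
    (h2 : b * ∑ l ∈ range (L+2), k.choose (s + 2 - l) * V.choose l = v.choose (s+2))
    (hb : 0 < b) (hk : s - L ≤ k) (hV : L + 1 ≤ V) :
    (k + L - s) * (s - L) = (L+1) * (V - L - 1) := by
  obtain ⟨j, rfl⟩ : ∃ j, s = j + L + 1 := ⟨s-L-1, by omega⟩
  have hr := bd_rec k V (j+L+1) L h
  have h1' : (b:ℝ) * ∑ l ∈ range (L+1), (k.choose (j+L+1 - l):ℝ) * V.choose l = v.choose (j+L+1) := by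
    exact_mod_cast h1
  have h2' : (b:ℝ) * ∑ l ∈ range (L+2), (k.choose (j+L+1+2 - l):ℝ) * V.choose l = v.choose (j+L+1+2) := by
    exact_mod_cast h2
  have w1 := bd_chooseR v (j+L+1)
  have w2 := bd_chooseR v (j+L+1+1)
  rw [show j+L+1+1+1 = j+L+1+2 by omega] at w2
  rw [← h2'] at w2
  rw [← h1'] at w1
  simp only [show j + L + 1 - L - 1 = j by omega, show j + L + 1 - L = j + 1 by omega] at hr hk ⊢
  have a1 := bd_chooseR k j
  have b1 := bd_chooseR V L
  have p1 : (0:ℝ) < k.choose (j+1) := by exact_mod_cast Nat.choose_pos hk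
  have p2 : (0:ℝ) < V.choose (L+1) := by exact_mod_cast Nat.choose_pos hV
  have hb' : (0:ℝ) < b := by exact_mod_cast hb
  have hvR : (v:ℝ) = k + V := by exact_mod_cast hv
  have key : (b:ℝ) * (((k:ℝ)-j)*(k-j-1) * (k.choose j * V.choose (L+1))
    - ((V:ℝ)-L)*(V-L-1) * (k.choose (j+1) * V.choose L)) = 0 := by
    push_cast at *
    rw [hvR] at w1 w2
    linear_combination (-(b:ℝ))*hr + ((j:ℝ)+L+1+1)*w2 + ((k:ℝ)+V-(j+L+1)-1)*w1
  have key2 := (mul_eq_zero.mp key).resolve_left hb'.ne'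
  have key3 : ((k.choose (j+1) : ℝ) * V.choose (L+1)) * (((k:ℝ)-j-1)*(j+1) - (L+1)*(V-L-1)) = 0 := by
    linear_combination key2 + ((k:ℝ)-j-1)*V.choose (L+1) * a1 - ((V:ℝ)-L-1)*k.choose (j+1)*b1
  have key4 := (mul_eq_zero.mp key3).resolve_left (by positivity)
  obtain ⟨k', rfl⟩ : ∃ k', k = j + 1 + k' := ⟨k - (j+1), by omega⟩
  obtain ⟨V', rfl⟩ : ∃ V', V = L + 1 + V' := ⟨V - (L+1), by omega⟩
  rw [show j + 1 + k' + L - (j+L+1) = k' by omega, show L + 1 + V' - L - 1 = V' by omega]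
  have : ((k' * (j+1) : ℕ):ℝ) = (((L+1)*V' : ℕ):ℝ) := by
    push_cast at *; linarith
  exact_mod_cast this

/-- sum over one-element deletions -/
noncomputable def bdU : Module.End ℝ (Finset α → ℝ) where
  toFun h X := ∑ x ∈ X, h (X.erase x)
  map_add' f g := by ext X; simp [Finset.sum_add_distrib]
  map_smul' c f := by ext X; simp [Finset.mul_sum]

/-- sum over one-element extensions -/
noncomputable def bdD : Module.End ℝ (Finset α → ℝ) where
  toFun h X := ∑ x ∈ Xᶜ, h (insert x X)
  map_add' f g := by ext X; simp [Finset.sum_add_distrib]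
  map_smul' c f := by ext X; simp [Finset.mul_sum]

lemma bdU_apply (h : Finset α → ℝ) (X : Finset α) : bdU h X = ∑ x ∈ X, h (X.erase x) := rfl
lemma bdD_apply (h : Finset α → ℝ) (X : Finset α) : bdD h X = ∑ x ∈ Xᶜ, h (insert x X) := rfl

lemma bd_comm (h : Finset α → ℝ) (Z : Finset α) :
    bdD (bdU h) Z = bdU (bdD h) Z + ((Fintype.card α : ℝ) - 2 * Z.card) * h Z := by
  have e1 : bdD (bdU h) Z = ∑ x ∈ Zᶜ, (h Z + ∑ y ∈ Z, h (insert x (Z.erase y))) := by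
    rw [bdD_apply]
    refine Finset.sum_congr rfl fun x hx => ?_
    have hx' : x ∉ Z := by simpa using hx
    rw [bdU_apply, Finset.sum_insert hx', Finset.erase_insert hx']
    congr 1
    refine Finset.sum_congr rfl fun y hy => ?_
    rw [Finset.erase_insert_of_ne]
    rintro rfl; exact hx' hy
  have e2 : bdU (bdD h) Z = ∑ y ∈ Z, (h Z + ∑ x ∈ Zᶜ, h (insert x (Z.erase y))) := by
    rw [bdU_apply]
    refine Finset.sum_congr rfl fun y hy => ?_
    rw [bdD_apply]
    have : (Z.erase y)ᶜ = insert y Zᶜ := by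
      ext z; simp [Finset.mem_erase]
      try tauto
    rw [this, Finset.sum_insert (by simpa using hy), Finset.insert_erase hy]
  rw [e1, e2, Finset.sum_add_distrib, Finset.sum_add_distrib, Finset.sum_comm]
  have := Finset.card_add_card_compl Z
  have h3 : ((Zᶜ).card : ℝ) = Fintype.card α - Z.card := by
    have : (Z.card : ℝ) + (Zᶜ).card = Fintype.card α := by exact_mod_cast this
    linarith
  simp only [sum_const, nsmul_eq_mul, h3]
  ring

def bdLev (s : ℕ) (h : Finset α → ℝ) : Prop := ∀ X, X.card ≠ s → h X = 0

lemma bdLev_U {s : ℕ} {h : Finset α → ℝ} (H : bdLev s h) : bdLev (s+1) (bdU h) := by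
  intro X hX
  rw [bdU_apply]
  refine Finset.sum_eq_zero fun x hx => H _ ?_
  rw [Finset.card_erase_of_mem hx]
  have := Finset.card_pos.mpr ⟨x, hx⟩
  omega

lemma bdLev_D {s : ℕ} {h : Finset α → ℝ} (H : bdLev (s+1) h) : bdLev s (bdD h) := by
  intro X hX
  rw [bdD_apply]
  refine Finset.sum_eq_zero fun x hx => H _ ?_
  rw [Finset.card_insert_of_notMem (by simpa using hx)]
  omega

lemma bdLev_D0 {h : Finset α → ℝ} (H : bdLev 0 h) : bdD h = 0 := by
  ext X
  rw [bdD_apply]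
  refine Finset.sum_eq_zero fun x hx => H _ ?_
  rw [Finset.card_insert_of_notMem (by simpa using hx)]
  omega

lemma bdLev_UD {s : ℕ} {h : Finset α → ℝ} (H : bdLev s h) : bdLev s (bdU (bdD h)) := by
  cases s with
  | zero => rw [bdLev_D0 H]; intro X _; simp
  | succ s => exact bdLev_U (bdLev_D H)

lemma bdLev_lin {s : ℕ} {f g : Finset α → ℝ} (Hf : bdLev s f) (Hg : bdLev s g) (c : ℝ) :
    bdLev s (f - c • g) := by
  intro X hX; simp [Hf X hX, Hg X hX]

lemma bd_comm_lev {s : ℕ} {h : Finset α → ℝ} (H : bdLev s h) :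
    bdU (bdD h) = bdD (bdU h) - ((Fintype.card α : ℝ) - 2 * s) • h := by
  ext Z
  have := bd_comm h Z
  simp only [Pi.sub_apply, Pi.smul_apply, smul_eq_mul]
  by_cases hz : Z.card = s
  · rw [← hz]; linarith
  · rw [H Z hz] at this ⊢; linarith

/-- eigenvalues -/
noncomputable def bdmu (v s : ℕ) (r : ℕ) : ℝ := (r:ℝ) * ((v:ℝ) - 2 * s + r + 1)

lemma bd_eigen (s : ℕ) : ∀ (h : Finset α → ℝ) (μ : ℝ), bdLev s h → bdU (bdD h) = μ • h → h ≠ 0 →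
    ∃ r ≤ s, μ = bdmu (Fintype.card α) s r := by
  induction s with
  | zero =>
    intro h μ H e hn
    rw [bdLev_D0 H, map_zero] at e
    exact ⟨0, le_rfl, by simpa [bdmu, hn, eq_comm] using e⟩
  | succ s ih =>
    intro h μ H e hn
    by_cases hD : bdD h = 0
    · rw [hD, map_zero] at e
      exact ⟨0, by omega, by simpa [bdmu, hn, eq_comm] using e⟩
    · have := bd_comm_lev (bdLev_D H)
      rw [e, map_smul, ← sub_smul] at this
      obtain ⟨r, hr, h2⟩ := ih _ _ (bdLev_D H) this hD
      refine ⟨r+1, by omega, ?_⟩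
      simp only [bdmu] at *
      push_cast
      linear_combination h2

lemma bdLev_Dpow {s : ℕ} {h : Finset α → ℝ} (H : bdLev s h) (r : ℕ) (hr : r ≤ s) :
    bdLev (s - r) ((bdD ^ r) h) := by
  induction r with
  | zero => simpa using H
  | succ r ih =>
    rw [pow_succ', Module.End.mul_apply]
    have := ih (by omega)
    rw [show s - r = (s - (r+1)) + 1 by omega] at this
    exact bdLev_D this

lemma bd_shift {s : ℕ} {h : Finset α → ℝ} (H : bdLev s h) (r : ℕ) (hr : r ≤ s) :
    bdU (bdD ((bdD ^ r) h)) = (bdD ^ r) (bdU (bdD h) - bdmu (Fintype.card α) s r • h) := by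
  induction r with
  | zero => simp [bdmu]
  | succ r ih =>
    rw [bd_comm_lev (bdLev_Dpow H (r+1) hr)]
    conv_lhs => rw [pow_succ', Module.End.mul_apply]
    rw [ih (by omega), ← Module.End.mul_apply, ← Module.End.mul_apply, ← pow_succ']
    simp only [map_sub, map_smul]
    have e0 : bdD ((bdD ^ r) h) = (bdD ^ (r+1)) h := by rw [pow_succ', Module.End.mul_apply]
    rw [e0, sub_sub, ← add_smul]
    congr 2
    simp only [bdmu]
    push_cast [hr]
    ring

open Polynomial in
noncomputable def bdPhi (v s : ℕ) : ℕ → Polynomial ℝ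
  | 0 => 1
  | r+1 => bdPhi v s r * (X - C (bdmu v s r))

lemma bd_UD_Phi (s : ℕ) (r : ℕ) (hr : r ≤ s) : ∀ {h : Finset α → ℝ}, bdLev s h →
    (bdU ^ r) ((bdD ^ r) h) = Polynomial.aeval (bdU * bdD : Module.End ℝ (Finset α → ℝ))
      (bdPhi (Fintype.card α) s r) h := by
  induction r with
  | zero => intro h _; simp [bdPhi]
  | succ r ih =>
    intro h H
    rw [pow_succ, pow_succ', Module.End.mul_apply, Module.End.mul_apply, bd_shift H r (by omega),
      ih (by omega) (bdLev_lin (bdLev_UD H) H _)]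
    simp only [bdPhi, map_mul, map_sub, Polynomial.aeval_X, Polynomial.aeval_C, Module.End.mul_apply]
    simp [Module.algebraMap_end_apply]

noncomputable def bdq (B : Finset α) (p j : ℕ) : Finset α → ℝ := fun X =>
  if X.card = p then ((X ∩ B).card.choose j : ℝ) else 0

lemma bdLev_q (B : Finset α) (p j : ℕ) : bdLev p (bdq B p j) := by
  intro X hX; simp [bdq, hX]

lemma bdq_self (B : Finset α) (j : ℕ) (X : Finset α) :
    bdq B j j X = if X.card = j ∧ X ⊆ B then 1 else 0 := by
  unfold bdq
  by_cases h : X.card = j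
  · by_cases h2 : X ⊆ B
    · simp [h, h2, Finset.inter_eq_left.mpr h2]
    · simp only [h, h2, if_true, and_false, if_false]
      have : (X ∩ B).card < j := by
        rw [← h]
        refine Finset.card_lt_card ⟨inter_subset_left, fun h3 => h2 fun x hx => ?_⟩
        exact (mem_inter.mp (h3 hx)).2
      rw [Nat.choose_eq_zero_of_lt this]; simp
  · simp [h]

lemma bd_D_q (B : Finset α) (j : ℕ) :
    bdD (bdq B (j+1) (j+1)) = ((B.card : ℝ) - j) • bdq B j j := by
  ext Z
  rw [bdD_apply, Pi.smul_apply, smul_eq_mul, bdq_self]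
  by_cases h : Z.card = j ∧ Z ⊆ B
  · have : ∀ x ∈ Zᶜ, bdq B (j+1) (j+1) (insert x Z) = if x ∈ B then 1 else 0 := by
      intro x hx
      have hx : x ∉ Z := by simpa using hx
      rw [bdq_self, Finset.card_insert_of_notMem hx, h.1]
      simp [Finset.insert_subset_iff, h.2]
    rw [Finset.sum_congr rfl this, if_pos h]
    simp only [sum_boole, mul_one]
    have e : ({x ∈ Zᶜ | x ∈ B} : Finset α) = B \ Z := by ext x; simp; tauto
    rw [e, Finset.card_sdiff_of_subset h.2, h.1, Nat.cast_sub]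
    rw [← h.1]; exact Finset.card_le_card h.2
  · rw [if_neg h, mul_zero]
    refine Finset.sum_eq_zero fun x hx => ?_
    have hx : x ∉ Z := by simpa using hx
    rw [bdq_self, Finset.card_insert_of_notMem hx, if_neg]
    rintro ⟨h1, h2⟩
    exact h ⟨by omega, (subset_insert _ _).trans h2⟩

lemma bd_U_q (B : Finset α) (p j : ℕ) :
    bdU (bdq B p j) = ((p : ℝ) + 1 - j) • bdq B (p+1) j := by
  ext X
  rw [bdU_apply, Pi.smul_apply, smul_eq_mul]
  by_cases h : X.card = p + 1
  · have : ∀ x ∈ X, bdq B p j (X.erase x) =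
        if x ∈ B then (((X ∩ B).card - 1).choose j : ℝ) else ((X ∩ B).card.choose j : ℝ) := by
      intro x hx
      unfold bdq
      rw [if_pos (by rw [Finset.card_erase_of_mem hx]; omega), Finset.erase_inter]
      by_cases hb : x ∈ B
      · rw [Finset.card_erase_of_mem (by simp [hx, hb])]; simp [hb]
      · rw [Finset.erase_eq_of_notMem (by simp [hb])]; simp [hb]
    rw [Finset.sum_congr rfl this, Finset.sum_ite]
    simp only [sum_const, nsmul_eq_mul, bdq, h, if_true]
    rw [Finset.filter_mem_eq_inter]
    have e : ({x ∈ X | x ∉ B} : Finset α) = X \ B := by ext x; simp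
    rw [e]
    have h2 := Finset.card_inter_add_card_sdiff X B
    have h3 : ((X \ B).card : ℝ) = p + 1 - (X ∩ B).card := by
      have : ((X ∩ B).card : ℝ) + (X \ B).card = p + 1 := by rw [h] at h2; exact_mod_cast h2
      linarith
    rw [h3]
    generalize (X ∩ B).card = c
    cases c with
    | zero =>
      simp
      cases j with
      | zero => simp
      | succ j => simp
    | succ c =>
      have : ((c+1 : ℕ):ℝ) * (c.choose j) = ((c:ℝ)+1-j) * ((c+1).choose j) := by
        rcases le_or_gt j (c+1) with hj | hj
        · have h := Nat.add_one_mul_choose_eq c j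
          have h' := Nat.choose_succ_right_eq (c+1) j
          have : (c+1) * c.choose j = (c+1).choose j * (c + 1 - j) := by
            rw [← h']; exact h
          have t : (((c+1) * c.choose j : ℕ):ℝ) = (((c+1).choose j * (c + 1 - j) : ℕ):ℝ) := by rw [this]
          push_cast [hj] at t ⊢
          linarith
        · rw [Nat.choose_eq_zero_of_lt hj, Nat.choose_eq_zero_of_lt (by omega : c < j)]; simp
      simp only [Nat.add_sub_cancel]
      rw [this]; push_cast; ring
  · have h0 : bdq B (p+1) j X = 0 := by simp [bdq, h]
    rw [h0, mul_zero]
    refine Finset.sum_eq_zero fun x hx => ?_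
    have := Finset.card_pos.mpr ⟨x, hx⟩
    exact bdLev_q B p j _ (by rw [Finset.card_erase_of_mem hx]; omega)

noncomputable def bdK (k s r : ℕ) : ℝ := ∏ i ∈ range r, ((k:ℝ) - s + 1 + i)

lemma bd_Dpow_q (B : Finset α) (s r : ℕ) (hr : r ≤ s) :
    (bdD ^ r) (bdq B s s) = bdK B.card s r • bdq B (s - r) (s - r) := by
  induction r with
  | zero => simp [bdK]
  | succ r ih =>
    rw [pow_succ', Module.End.mul_apply, ih (by omega), map_smul,
      show s - r = (s - (r+1)) + 1 by omega, bd_D_q, smul_smul]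
    congr 1
    simp only [bdK, Finset.prod_range_succ]
    push_cast [hr]
    ring

lemma bd_Upow_q (B : Finset α) (p r : ℕ) :
    (bdU ^ r) (bdq B p p) = (r.factorial : ℝ) • bdq B (p + r) p := by
  induction r with
  | zero => simp
  | succ r ih =>
    rw [pow_succ', Module.End.mul_apply, ih, map_smul, bd_U_q, smul_smul]
    congr 1
    rw [Nat.factorial_succ]; push_cast; ring

lemma bd_Phi_q (B : Finset α) (s r : ℕ) (hr : r ≤ s) :
    Polynomial.aeval (bdU * bdD : Module.End ℝ (Finset α → ℝ))
      (bdPhi (Fintype.card α) s r) (bdq B s s) = ((r.factorial : ℝ) * bdK B.card s r) • bdq B s (s-r) := by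
  rw [← bd_UD_Phi s r hr (bdLev_q B s s), bd_Dpow_q B s r hr, map_smul, bd_Upow_q, smul_smul,
    Nat.sub_add_cancel hr, mul_comm]

lemma bd_alt (τ L : ℕ) (c : ℕ) (hc : c ≤ τ + 1 + L) :
    ∑ u ∈ range (L+1), (-1:ℤ)^u * (τ+u).choose u * c.choose (τ+1+u) = if τ + 1 ≤ c then 1 else 0 := by
  induction c with
  | zero => simp [show ∀ u, τ + 1 + u = (τ + u) + 1 by intro u; omega]
  | succ c ih =>
    have h1 : ∀ u ∈ range (L+1), (-1:ℤ)^u * (τ+u).choose u * (c+1).choose (τ+1+u) =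
        (-1:ℤ)^u * (τ+u).choose u * c.choose (τ+1+u) + (c.choose τ : ℤ) * ((-1)^u * (c-τ).choose u) := by
      intro u _
      rw [show τ + 1 + u = (τ + u) + 1 by omega, Nat.choose_succ_succ]
      have : c.choose (τ+u) * (τ+u).choose u = c.choose τ * (c-τ).choose u := by
        rcases le_or_gt (τ+u) c with h | h
        · have := Nat.choose_mul (n := c) (k := τ+u) (s := τ) (by omega)
          rw [Nat.add_sub_cancel_left] at this
          rw [← this, Nat.choose_symm_add]
        · rw [Nat.choose_eq_zero_of_lt h]
          rcases le_or_gt τ c with h' | h'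
          · rw [Nat.choose_eq_zero_of_lt (by omega : c - τ < u)]; simp
          · rw [Nat.choose_eq_zero_of_lt h']; simp
      have t : (c.choose (τ+u) : ℤ) * (τ+u).choose u = c.choose τ * (c-τ).choose u := by exact_mod_cast this
      push_cast
      linear_combination (-1)^u * t
    rw [Finset.sum_congr rfl h1, Finset.sum_add_distrib, ih (by omega), ← Finset.mul_sum]
    have h2 : ∑ u ∈ range (L+1), (-1:ℤ)^u * (c-τ).choose u = if c - τ = 0 then 1 else 0 := by
      rw [← Int.alternating_sum_range_choose]
      symm
      apply Finset.sum_subset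
      · intro x; simp; omega
      · intro x _ hx
        rw [Nat.choose_eq_zero_of_lt (by simp at hx; omega)]; simp
    rw [h2]
    rcases lt_trichotomy c τ with h | h | h
    · rw [Nat.choose_eq_zero_of_lt h, if_neg (by omega), if_neg (by omega : ¬ τ + 1 ≤ c + 1)]; simp
    · subst h; simp
    · rw [if_pos (by omega), if_neg (by omega : ¬ c - τ = 0), if_pos (by omega : τ + 1 ≤ c + 1)]; simp

lemma bd_alt2 (s L c : ℕ) (hL : L < s) (hc : c ≤ s) :
    ∑ r ∈ range (L+1), (-1:ℝ)^r * (s-1-r).choose (L-r) * c.choose (s-r) =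
      (-1)^L * if s - L ≤ c then 1 else 0 := by
  obtain ⟨τ, rfl⟩ : ∃ τ, s = τ + 1 + L := ⟨s - 1 - L, by omega⟩
  have := bd_alt τ L c hc
  rw [← Finset.sum_range_reflect] at this
  have h2 := congrArg (fun z : ℤ => (-1:ℝ)^L * (z:ℝ)) this
  rw [show τ + 1 + L - L = τ + 1 by omega]
  push_cast at h2
  rw [← h2, Finset.mul_sum]
  refine Finset.sum_congr rfl fun r hr => ?_
  have hr : r ≤ L := by simp at hr; omega
  rw [show τ + (L - r) = τ + 1 + L - 1 - r by omega,
    show τ + 1 + (L - r) = τ + 1 + L - r by omega]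
  have : (-1:ℝ)^L * (-1)^(L-r) = (-1)^r := by
    obtain ⟨w, rfl⟩ := Nat.exists_eq_add_of_le hr
    rw [Nat.add_sub_cancel_left, ← pow_add, show r + w + w = r + 2 * w by omega, pow_add, pow_mul]; simp
  rw [← this]; ring

open Polynomial in
/-- locality of powers -/
lemma bd_local (𝓑 : Finset (Finset α)) (g : Finset α → ℝ) (c : ℕ)
    (hg : ∀ X, (∀ B ∈ 𝓑, (X ∩ B).card < c) → g X = 0) (r : ℕ) :
    ∀ X : Finset α, (∀ B ∈ 𝓑, (X ∩ B).card + r < c) → ((bdU * bdD : Module.End ℝ (Finset α → ℝ)) ^ r) g X = 0 := by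
  induction r with
  | zero => intro X h; simpa using hg X h
  | succ r ih =>
    intro X h
    rw [pow_succ', Module.End.mul_apply, Module.End.mul_apply, bdU_apply]
    refine Finset.sum_eq_zero fun x hx => ?_
    rw [bdD_apply]
    refine Finset.sum_eq_zero fun y hy => ih _ fun B hB => ?_
    have h1 := h B hB
    have h2 : (insert y (X.erase x) ∩ B) ⊆ insert y (X ∩ B) := by
      intro z hz
      simp at hz ⊢; tauto
    have := (Finset.card_le_card h2).trans (Finset.card_insert_le _ _)
    omega

lemma bd_Phi_eval (v s j r : ℕ) (h : j < r) : (bdPhi v s r).eval (bdmu v s j) = 0 := by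
  induction r with
  | zero => omega
  | succ r ih =>
    simp only [bdPhi, Polynomial.eval_mul, Polynomial.eval_sub, Polynomial.eval_X, Polynomial.eval_C]
    rcases Nat.lt_succ_iff_lt_or_eq.mp h with h | h
    · rw [ih h]; simp
    · subst h; simp

lemma bd_Phi_deg (v s r : ℕ) : (bdPhi v s r).natDegree ≤ r := by
  induction r with
  | zero => simp [bdPhi]
  | succ r ih =>
    simp only [bdPhi]
    refine Polynomial.natDegree_mul_le.trans ?_
    rw [Polynomial.natDegree_X_sub_C]; omega

noncomputable def bdc (k s L r : ℕ) : ℝ :=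
  (-1:ℝ)^r * (s-1-r).choose (L-r) / ((r.factorial : ℝ) * bdK k s r)

noncomputable def bdP (v k s L : ℕ) : Polynomial ℝ :=
  ∑ r ∈ range (L+1), Polynomial.C (bdc k s L r) * bdPhi v s r

lemma bd_P_deg (v k s L : ℕ) : (bdP v k s L).natDegree ≤ L := by
  refine Polynomial.natDegree_sum_le_of_forall_le _ _ fun r hr => ?_
  refine (Polynomial.natDegree_C_mul_le _ _).trans ((bd_Phi_deg v s r).trans ?_)
  simp at hr; omega

lemma bdK_pos (k s r : ℕ) (h : s ≤ k) : 0 < bdK k s r := by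
  have : (s:ℝ) ≤ k := by exact_mod_cast h
  refine Finset.prod_pos fun i _ => ?_
  have : (0:ℝ) ≤ i := by positivity
  linarith

lemma bd_P_eval (v k s L j : ℕ) (hj : j ≤ L) : (bdP v k s L).eval (bdmu v s j) =
    ∑ r ∈ range (j+1), bdc k s L r * (bdPhi v s r).eval (bdmu v s j) := by
  simp only [bdP, Polynomial.eval_finsetSum, Polynomial.eval_mul, Polynomial.eval_C]
  symm
  apply Finset.sum_subset
  · intro x; simp; omega
  · intro x _ hx
    rw [bd_Phi_eval v s j x (by simp at hx; omega)]; simp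

lemma bd_signs (v k s L : ℕ) (hs : s ≤ k) (hL2 : 2 ≤ L) (hL : L < s)
    (h1 : (L:ℝ) * ((v:ℝ) - 2*s + 2) < ((s:ℝ)-1)*((k:ℝ)-s+2 - 1 + 0))
    (h2 : ((s:ℝ)-1)*(s-2)*((k:ℝ)-s+1)*(k-s+2) - 2*L*((v:ℝ)-2*s+3)*(s-2)*((k:ℝ)-s+2)
      + L*((L:ℝ)-1)*((v:ℝ)-2*s+3)*((v:ℝ)-2*s+4) < 0) :
    0 < (bdP v k s L).eval (bdmu v s 1) ∧ (bdP v k s L).eval (bdmu v s 2) < 0 := by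
  rw [bd_P_eval _ _ _ _ _ (by omega), bd_P_eval _ _ _ _ _ hL2]
  obtain ⟨L, rfl⟩ : ∃ L', L = L' + 2 := ⟨L - 2, by omega⟩
  obtain ⟨s, rfl⟩ : ∃ s', s = s' + 3 := ⟨s - 3, by omega⟩
  obtain ⟨κ, rfl⟩ : ∃ κ, k = s + 3 + κ := ⟨k - (s+3), by omega⟩
  have c1 := Nat.add_one_mul_choose_eq (s+1) (L+1)
  have c2 := Nat.add_one_mul_choose_eq s L
  have hp : 0 < s.choose L := Nat.choose_pos (by omega)
  have c1' : ((s:ℝ)+2) * (s+1).choose (L+1) = (s+2).choose (L+2) * (L+2) := by exact_mod_cast c1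
  have c2' : ((s:ℝ)+1) * s.choose L = (s+1).choose (L+1) * (L+1) := by exact_mod_cast c2
  have hp' : (0:ℝ) < s.choose L := by exact_mod_cast hp
  have e1 : ((s+1).choose (L+1) : ℝ) = (s+1) * s.choose L / (L+1) := by
    rw [eq_div_iff (by positivity)]; linarith
  have e0 : ((s+2).choose (L+2) : ℝ) = (s+2) * ((s+1) * s.choose L / (L+1)) / (L+2) := by
    rw [eq_div_iff (by positivity), ← e1]; linarith
  simp only [Finset.sum_range_succ, Finset.sum_range_zero, bdc, bdPhi, bdK, Finset.prod_range_succ,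
    Finset.prod_range_zero, bdmu, Polynomial.eval_mul, Polynomial.eval_sub, Polynomial.eval_X,
    Polynomial.eval_C, Polynomial.eval_one, Nat.sub_zero,
    show s + 3 - 1 = s + 2 by omega, show s + 2 - 1 = s + 1 by omega, show s + 2 - 2 = s by omega,
    show L + 2 - 1 = L + 1 by omega, show L + 2 - 2 = L by omega, e0, e1, Nat.factorial]
  push_cast at *
  generalize (s.choose L : ℝ) = c at *
  have hκ : (0:ℝ) ≤ κ := by positivity
  have hs0 : (0:ℝ) ≤ s := by positivity
  have hL0 : (0:ℝ) ≤ L := by positivity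
  generalize (κ:ℝ) = x at *
  generalize (s:ℝ) = y at *
  generalize (L:ℝ) = z at *
  generalize (v:ℝ) = w at *
  have x1 : 0 < x + 1 := by linarith
  have x2 : 0 < x + 2 := by linarith
  have y1 : 0 < y + 1 := by linarith
  have z1 : 0 < z + 1 := by linarith
  have z2 : 0 < z + 2 := by linarith
  constructor
  · have : (0:ℝ) < (y+1)*c/((z+1)*(z+2)*(x+1)) * ((y+2)*(x+1) - (z+2)*(w-2*(y+3)+2)) := by
      apply mul_pos (by positivity)
      linarith
    convert this using 1
    rw [show y + 3 + x - (y + 3) + 1 + 0 = x + 1 by ring]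
    field_simp
    ring
  · have : c/((z+1)*(z+2)*(x+1)*(x+2)) * ((y+2)*(y+1)*(x+1)*(x+2) - 2*(z+2)*(w-2*(y+3)+3)*(y+1)*(x+2)
       + (z+2)*(z+1)*(w-2*(y+3)+3)*(w-2*(y+3)+4)) < 0 := by
      apply mul_neg_of_pos_of_neg (by positivity)
      linarith
    convert this using 1
    rw [show y + 3 + x - (y + 3) + 1 + 0 = x + 1 by ring, show y + 3 + x - (y + 3) + 1 + 1 = x + 2 by ring]
    field_simp
    ring

lemma bd_P_g (𝓑 : Finset (Finset α)) (k s L : ℕ) (hk : ∀ B ∈ 𝓑, B.card = k) (hs : s ≤ k) (hL : L < s)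
    (hβ : ∀ X : Finset α, X.card = s → ∃! B, B ∈ 𝓑 ∧ s - L ≤ (X ∩ B).card) :
    Polynomial.aeval (bdU * bdD : Module.End ℝ (Finset α → ℝ)) (bdP (Fintype.card α) k s L)
      (∑ B ∈ 𝓑, bdq B s s) = fun X => if X.card = s then (-1:ℝ)^L else 0 := by
  have h1 : ∀ B ∈ 𝓑, Polynomial.aeval (bdU * bdD : Module.End ℝ (Finset α → ℝ))
      (bdP (Fintype.card α) k s L) (bdq B s s) =
      fun X => if X.card = s then (-1:ℝ)^L * (if s - L ≤ (X ∩ B).card then 1 else 0) else 0 := by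
    intro B hB
    rw [bdP, map_sum, LinearMap.sum_apply]
    have : ∀ r ∈ range (L+1), Polynomial.aeval (bdU * bdD : Module.End ℝ (Finset α → ℝ))
        (Polynomial.C (bdc k s L r) * bdPhi (Fintype.card α) s r) (bdq B s s) =
        ((-1:ℝ)^r * (s-1-r).choose (L-r)) • bdq B s (s-r) := by
      intro r hr
      simp at hr
      rw [map_mul, Polynomial.aeval_C, Module.End.mul_apply, bd_Phi_q B s r (by omega),
        Module.algebraMap_end_apply, smul_smul, hk B hB]
      congr 1
      have := bdK_pos k s r hs
      rw [bdc, div_mul_cancel₀]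
      positivity
    rw [Finset.sum_congr rfl this]
    ext X
    simp only [Finset.sum_apply, Pi.smul_apply, smul_eq_mul, bdq]
    by_cases hX : X.card = s
    · simp only [hX, if_true]
      exact bd_alt2 s L _ hL (by rw [← hX]; exact Finset.card_le_card inter_subset_left)
    · simp [hX]
  rw [map_sum, Finset.sum_congr rfl h1]
  ext X
  simp only [Finset.sum_apply]
  by_cases hX : X.card = s
  · simp only [hX, if_true]
    rw [← Finset.mul_sum]
    obtain ⟨B, hB, hu⟩ := hβ X hX
    have : ∑ C ∈ 𝓑, (if s - L ≤ (X ∩ C).card then (1:ℝ) else 0) = 1 := by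
      rw [Finset.sum_eq_single B]
      · simp [hB.2]
      · intro C hC hne
        rw [if_neg]
        intro h; exact hne (hu C ⟨hC, h⟩)
      · intro h; exact absurd hB.1 h
    rw [this, mul_one]
  · simp [hX]

lemma bdLev_aeval {s : ℕ} (p : Polynomial ℝ) {h : Finset α → ℝ} (H : bdLev s h) :
    bdLev s (Polynomial.aeval (bdU * bdD : Module.End ℝ (Finset α → ℝ)) p h) := by
  rw [Polynomial.aeval_eq_sum_range, LinearMap.sum_apply]
  intro X hX
  rw [Finset.sum_apply]
  refine Finset.sum_eq_zero fun r _ => ?_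
  have : bdLev s (((bdU * bdD : Module.End ℝ (Finset α → ℝ)) ^ r) h) := by
    clear * - H
    induction r with
    | zero => simpa using H
    | succ r ih =>
      rw [pow_succ', Module.End.mul_apply]
      exact bdLev_UD ih
  simp [this X hX]

lemma bd_UD_one (s : ℕ) :
    bdU (bdD (fun X : Finset α => if X.card = s then (1:ℝ) else 0)) =
      ((s:ℝ) * ((Fintype.card α : ℝ) - s + 1)) • fun X : Finset α => if X.card = s then (1:ℝ) else 0 := by
  ext X
  rw [Pi.smul_apply, smul_eq_mul, bdU_apply]
  have : ∀ x ∈ X, bdD (fun X : Finset α => if X.card = s then (1:ℝ) else 0) (X.erase x) =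
      if X.card = s then (Fintype.card α : ℝ) - s + 1 else 0 := by
    intro x hx
    have hc := Finset.card_pos.mpr ⟨x, hx⟩
    rw [bdD_apply]
    have h2 : ∀ y ∈ (X.erase x)ᶜ, (if (insert y (X.erase x)).card = s then (1:ℝ) else 0) =
        if X.card = s then 1 else 0 := by
      intro y hy
      rw [Finset.card_insert_of_notMem (Finset.mem_compl.mp hy), Finset.card_erase_of_mem hx,
        Nat.sub_add_cancel hc]
    rw [Finset.sum_congr rfl h2]
    by_cases hX : X.card = s
    · simp only [hX, if_true, sum_const, nsmul_eq_mul, mul_one]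
      have h4 := Finset.card_add_card_compl (X.erase x)
      rw [Finset.card_erase_of_mem hx] at h4
      have : (((X.erase x)ᶜ).card : ℝ) + s = Fintype.card α + 1 := by
        rw [← hX]
        exact_mod_cast (by omega : ((X.erase x)ᶜ).card + X.card = Fintype.card α + 1)
      linarith
    · simp [hX]
  rw [Finset.sum_congr rfl this]
  by_cases hX : X.card = s
  · simp [hX]; try ring
  · simp [hX]

lemma bd_core (𝓑 : Finset (Finset α)) (k s L : ℕ) (hk : ∀ B ∈ 𝓑, B.card = k) (hs : s ≤ k)
    (hL2 : 2 ≤ L) (hL : L < s) (h2s : 2 * s ≤ Fintype.card α) (hne : 𝓑.Nonempty)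
    (hLV : L ≤ Fintype.card α - k)
    (hβ : ∀ X : Finset α, X.card = s → ∃! B, B ∈ 𝓑 ∧ s - L ≤ (X ∩ B).card)
    (h1 : (L:ℝ) * ((Fintype.card α:ℝ) - 2*s + 2) < ((s:ℝ)-1)*((k:ℝ)-s+2 - 1 + 0))
    (h2 : ((s:ℝ)-1)*(s-2)*((k:ℝ)-s+1)*(k-s+2) - 2*L*((Fintype.card α:ℝ)-2*s+3)*(s-2)*((k:ℝ)-s+2)
      + L*((L:ℝ)-1)*((Fintype.card α:ℝ)-2*s+3)*((Fintype.card α:ℝ)-2*s+4) < 0) : False := by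
  obtain ⟨g1, g2⟩ := bd_signs (Fintype.card α) k s L hs hL2 hL h1 h2
  set v := Fintype.card α with hvdef
  have h2s' : 2 * (s:ℝ) ≤ v := by exact_mod_cast h2s
  have hs2 : (3:ℝ) ≤ s := by exact_mod_cast (by omega : 3 ≤ s)
  have hmu : ∀ r : ℕ, bdmu v s r < bdmu v s (r+1) := by
    intro r; simp only [bdmu]; push_cast
    have : (0:ℝ) ≤ r := by positivity
    nlinarith
  have hmono : StrictMono (bdmu v s) := strictMono_nat_of_lt_succ hmu
  have h12 := hmu 1
  -- the root
  obtain ⟨ρ, hρ, hρ0⟩ : ∃ ρ ∈ Set.Ioo (bdmu v s 1) (bdmu v s 2), (bdP v k s L).eval ρ = 0 := by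
    have := intermediate_value_Ioo' h12.le (f := fun x => (bdP v k s L).eval x)
      (Polynomial.continuous _).continuousOn
    exact this ⟨g2, g1⟩
  have hnomu : ∀ r, ρ ≠ bdmu v s r := by
    intro r hr
    rw [hr] at hρ
    have a1 := hmono.lt_iff_lt.mp hρ.1
    have a2 := hmono.lt_iff_lt.mp hρ.2
    omega
  obtain ⟨R, hR⟩ := Polynomial.dvd_iff_isRoot.mpr hρ0
  have hP0 : bdP v k s L ≠ 0 := by
    intro h; rw [h] at g1; simp at g1
  have hRdeg : R.natDegree + 1 ≤ L := by
    have := bd_P_deg v k s L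
    rw [hR] at this hP0
    have hR0 : R ≠ 0 := right_ne_zero_of_mul hP0
    rw [Polynomial.natDegree_mul (Polynomial.X_sub_C_ne_zero ρ) hR0, Polynomial.natDegree_X_sub_C] at this
    omega
  set g : Finset α → ℝ := ∑ B ∈ 𝓑, bdq B s s with hg
  have hgl : bdLev s g := by
    intro X hX
    rw [hg, Finset.sum_apply]
    exact Finset.sum_eq_zero fun B _ => bdLev_q B s s X hX
  have hPg := bd_P_g 𝓑 k s L hk hs hL hβ
  rw [← hvdef, ← hg, hR, map_mul, Module.End.mul_apply] at hPg
  set f := Polynomial.aeval (bdU * bdD : Module.End ℝ (Finset α → ℝ)) R g with hf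
  set o : Finset α → ℝ := fun X : Finset α => if X.card = s then (1:ℝ) else 0 with ho
  have hol : bdLev s o := by intro X hX; simp [ho, hX]
  have hfl : bdLev s f := bdLev_aeval R hgl
  have hPg' : bdU (bdD f) - ρ • f = ((-1:ℝ)^L) • o := by
    have e : (fun X : Finset α => if X.card = s then (-1:ℝ)^L else 0) = ((-1:ℝ)^L) • o := by
      ext X; simp [ho]
    rw [← e, ← hPg]
    simp [Module.algebraMap_end_apply]
  have hone := bd_UD_one (α := α) s
  rw [← ho, ← hvdef] at hone
  set M : ℝ := (s:ℝ) * ((v:ℝ) - s + 1) with hM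
  have hMs : M = bdmu v s s := by simp only [hM, bdmu]; ring
  have hMρ : M - ρ ≠ 0 := by
    rw [hMs]; intro h; exact hnomu s (by linarith)
  set c : ℝ := (-1:ℝ)^L / (M - ρ) with hc
  have hc0 : c ≠ 0 := div_ne_zero (by positivity) hMρ
  have hcM : c * (M - ρ) = (-1:ℝ)^L := by rw [hc]; field_simp
  have heig : bdU (bdD (f - c • o)) = ρ • (f - c • o) := by
    rw [map_sub, map_sub, map_smul, map_smul, hone]
    have : bdU (bdD f) = ρ • f + (c * (M - ρ)) • o := by
      rw [hcM, ← hPg']; abel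
    rw [this]
    module
  have hfo : f - c • o = 0 := by
    by_contra hn
    obtain ⟨r, _, hr⟩ := bd_eigen s _ ρ (bdLev_lin hfl hol c) heig hn
    exact hnomu r hr
  -- the far point
  obtain ⟨B, hB⟩ := hne
  obtain ⟨Y, hY, hYc⟩ := Finset.exists_subset_card_eq (s := B) (n := s - L) (by rw [hk B hB]; omega)
  obtain ⟨Z, hZ, hZc⟩ := Finset.exists_subset_card_eq (s := Bᶜ) (n := L)
    (by rw [Finset.card_compl, hk B hB]; exact hLV)
  have hZB : ∀ x ∈ Z, x ∉ B := fun x hx => by have := hZ hx; simpa using this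
  have hdis : Disjoint Y Z := by
    rw [Finset.disjoint_left]; intro x hx hz; exact hZB x hz (hY hx)
  have hXc : (Y ∪ Z).card = s := by rw [card_union_of_disjoint hdis]; omega
  have hXB : (Y ∪ Z) ∩ B = Y := by
    ext x
    simp only [mem_inter, mem_union]
    constructor
    · rintro ⟨h | h, hb⟩
      · exact h
      · exact absurd hb (hZB x h)
    · intro h; exact ⟨Or.inl h, hY h⟩
  have hfar : ∀ C ∈ 𝓑, ((Y ∪ Z) ∩ C).card ≤ s - L := by
    intro C hC
    by_contra hlt
    push Not at hlt
    obtain ⟨E, _, hu⟩ := hβ _ hXc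
    have e1 := hu C ⟨hC, hlt.le⟩
    have e2 := hu B ⟨hB, by rw [hXB, hYc]⟩
    rw [e1, ← e2, hXB] at hlt
    omega
  have hf0 : f (Y ∪ Z) = 0 := by
    rw [hf, Polynomial.aeval_eq_sum_range, LinearMap.sum_apply, Finset.sum_apply]
    refine Finset.sum_eq_zero fun r hr => ?_
    simp only [mem_range] at hr
    have := bd_local 𝓑 g s (by
      intro X hX
      rw [hg, Finset.sum_apply]
      refine Finset.sum_eq_zero fun C hC => ?_
      rw [bdq]
      split_ifs
      · rw [Nat.choose_eq_zero_of_lt (hX C hC)]; simp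
      · rfl) r (Y ∪ Z) (by
        intro C hC
        have := hfar C hC
        omega)
    rw [LinearMap.smul_apply, Pi.smul_apply, this, smul_zero]
  have := congrFun hfo (Y ∪ Z)
  simp [hf0, ho, hXc, hc0] at this

lemma bd_num (M D q : ℝ) (hM : 0 ≤ M) (hD : 0 ≤ D) (hq : 0 < q) :
    ((M+8)*q+2*(M+8)-2)*((M+8)*q+2*(M+8)-3)*((D+7)+2)*((D+7)+3)
      - 2*((M+8)-1)*((D+7)*q+2*(D+7)+5)*((M+8)*q+2*(M+8)-3)*((D+7)+3)
      + ((M+8)-1)*((M+8)-2)*((D+7)*q+2*(D+7)+5)*((D+7)*q+2*(D+7)+6) < 0 := by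
  rw [← neg_pos]
  ring_nf
  positivity

/-- **Theorem 4 (2).** Let `𝓑` be a `β(i)` design with parameter `(v, k, d)`, `i ≥ 9`,
`v ≥ 2k` and `d > 0`.  If `𝓑` is also a `β(i-1)` design, then
`2(i-1) ≤ k - d ≤ 2i + 4`. -/
theorem beta_design_kd_upper_both (𝓑 : Finset (Finset α)) (v k d i : ℕ)
    (hB : IsBetaDesign 𝓑 v k d i) (hi : 9 ≤ i) (hv : 2 * k ≤ v) (hd : 0 < d)
    (hB' : IsBetaDesign 𝓑 v k d (i - 1)) :
    2 * (i - 1) ≤ k - d ∧ k - d ≤ 2 * i + 4 := by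
  obtain ⟨⟨hcard, h2b, hdk, hkv, hBk, -, -⟩, -, h2i, hβi⟩ := hB
  obtain ⟨-, -, -, hβ⟩ := hB'
  obtain ⟨m, rfl⟩ : ∃ m, i = m + 1 := ⟨i - 1, by omega⟩
  rw [Nat.add_sub_cancel] at hβ ⊢
  obtain ⟨L, rfl⟩ : ∃ L, m = L + 1 := ⟨m - 1, by omega⟩
  subst hcard
  have hne : 𝓑.Nonempty := Finset.card_pos.mp (by omega)
  -- blocks have more than d + m elements
  have hkd : d + (L + 1 + 1) ≤ k := by
    obtain ⟨X, -, hX⟩ := Finset.exists_subset_card_eq (s := (univ : Finset α))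
      (n := d + 2 * (L + 1 + 1) - 1) (by rw [Finset.card_univ]; omega)
    obtain ⟨B, ⟨hB1, hB2⟩, -⟩ := hβi X hX
    have := Finset.card_le_card (inter_subset_right : X ∩ B ⊆ B)
    rw [hBk B hB1] at this
    omega
  have hβ1 : ∀ X : Finset α, X.card = d + 2 * L + 1 →
      ∃! B, B ∈ 𝓑 ∧ d + 2 * L + 1 - L ≤ (X ∩ B).card := by
    intro X hX
    have := hβ X (by omega)
    rwa [show d + (L + 1) = d + 2 * L + 1 - L by omega] at this
  have hβ2 : ∀ X : Finset α, X.card = d + 2 * L + 1 + 2 →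
      ∃! B, B ∈ 𝓑 ∧ d + 2 * L + 1 + 2 - (L + 1) ≤ (X ∩ B).card := by
    intro X hX
    have := hβi X (by omega)
    rwa [show d + (L + 1 + 1) = d + 2 * L + 1 + 2 - (L + 1) by omega] at this
  have t1 := bd_total 𝓑 k (d + 2 * L + 1) L (by omega) hBk hβ1
  have t2 := bd_total 𝓑 k (d + 2 * L + 1 + 2) (L + 1) (by omega) hBk hβ2
  have heq := bd_main_eq k (Fintype.card α - k) (Fintype.card α) (d + 2 * L + 1) L 𝓑.card
    (by omega) (by omega) t1 t2 (by omega) (by omega) (by omega)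
  obtain ⟨e, rfl⟩ : ∃ e, k = d + e := ⟨k - d, by omega⟩
  obtain ⟨w, hw⟩ : ∃ w, Fintype.card α = 2 * (d + e) + w := ⟨Fintype.card α - 2 * (d + e), by omega⟩
  obtain ⟨a, rfl⟩ : ∃ a, e = L + 1 + a := ⟨e - (L + 1), by omega⟩
  rw [show d + (L + 1 + a) + L - (d + 2 * L + 1) = a by omega,
    show d + 2 * L + 1 - L = d + L + 1 by omega,
    show Fintype.card α - (d + (L + 1 + a)) - L - 1 = d + a + w by omega] at heq
  have hlow : L + 1 ≤ a := by
    by_contra hlt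
    push Not at hlt
    have h3 : a * d < (L + 1) * d := Nat.mul_lt_mul_of_pos_right hlt hd
    nlinarith
  refine ⟨by omega, ?_⟩
  by_contra hup
  push Not at hup
  obtain ⟨D, rfl⟩ : ∃ D, a = L + 1 + 7 + D := ⟨a - (L + 8), by omega⟩
  obtain ⟨M, rfl⟩ : ∃ M, L = M + 7 := ⟨L - 7, by omega⟩
  have heqR : ((M:ℝ) + 7 + 1 + 7 + D) * (d + (M + 7) + 1) = (M + 7 + 1) * (d + (M + 7 + 1 + 7 + D) + w) := by
    exact_mod_cast heq
  have hM0 : (0:ℝ) ≤ M := by positivity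
  have hD0 : (0:ℝ) ≤ D := by positivity
  have hd0 : (0:ℝ) < d := by exact_mod_cast hd
  obtain ⟨q, hq⟩ : ∃ q : ℝ, (d:ℝ) = (M + 8) * q := ⟨d / (M + 8), by field_simp⟩
  have hq0 : 0 < q := by
    by_contra hn
    push Not at hn
    nlinarith
  have hwq : (w:ℝ) = (D + 7) * q := by
    have h8 : ((M:ℝ) + 8) ≠ 0 := by positivity
    apply mul_left_cancel₀ h8
    rw [hq] at heqR
    linear_combination -heqR
  have hcR : (Fintype.card α : ℝ) = 2 * (d + (M + 7 + 1 + (M + 7 + 1 + 7 + D))) + w := by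
    rw [hw]; push_cast; ring
  refine bd_core 𝓑 _ (d + 2 * (M + 7) + 1) (M + 7) hBk (by omega) (by omega) (by omega) (by omega) hne
    (by omega) hβ1 ?_ ?_
  · rw [hcR, hwq]
    push_cast
    rw [hq]
    have : 0 < (2 * ((M:ℝ) + 8) + (D + 7)) * q := by positivity
    linarith
  · have := bd_num M D q hM0 hD0 hq0
    rw [hcR, hwq]
    push_cast
    rw [hq]
    linarith
end

section
/- Let 𝓓 = (Ω, 𝓑) be a β(i) design with parameter (v, k, d), where v ≤ 2k and k−d ≥ i+2. If 𝓓 is not a β(i+1) design and i ≥ 18, then (i−1)(3i−1+√(i²−14i+1))/(2(i+1)) < k−d ≤ 2i; in particular 2i−8 ≤ k−d ≤ 2i. -/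
open Finset

variable {α : Type*} [Fintype α] [DecidableEq α]

lemma two_inter_le (X B C : Finset α) :
    (X ∩ B).card + (X ∩ C).card ≤ X.card + (X ∩ (B ∩ C)).card := by
  rw [← card_union_add_card_inter]
  have h1 : ((X ∩ B) ∪ (X ∩ C)).card ≤ X.card := card_le_card (by grind)
  have h2 : ((X ∩ B) ∩ (X ∩ C)) = X ∩ (B ∩ C) := by grind
  rw [h2]; omega

lemma uniq_block {𝓑 : Finset (Finset α)} {d : ℕ}
    (hd : ∀ B ∈ 𝓑, ∀ C ∈ 𝓑, B ≠ C → (B ∩ C).card ≤ d) {X B C : Finset α}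
    (hB : B ∈ 𝓑) (hC : C ∈ 𝓑) (h : X.card + d < (X ∩ B).card + (X ∩ C).card) : B = C := by
  by_contra hne
  have h1 := two_inter_le X B C
  have h2 := hd B hB C hC hne
  have h3 : (X ∩ (B ∩ C)).card ≤ (B ∩ C).card := card_le_card inter_subset_right
  omega

lemma step_one {𝓑 : Finset (Finset α)} {v k d i : ℕ} (hv : Fintype.card α = v)
    (hk : ∀ B ∈ 𝓑, B.card = k)
    (hd : ∀ B ∈ 𝓑, ∀ C ∈ 𝓑, B ≠ C → (B ∩ C).card ≤ d)
    (hi : 1 ≤ i) (hkd : d + i ≤ k)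
    (hcov : ∀ X : Finset α, X.card = d + 2 * i - 1 → ∃ B ∈ 𝓑, d + i ≤ (X ∩ B).card)
    (Y : Finset α) (hY : Y.card = d + 2 * i + 1)
    (hno : ∀ B ∈ 𝓑, (Y ∩ B).card < d + i + 1) :
    (d + 2 * i) * (k - d - i) ≤ i * (v - (d + 2 * i + 1)) := by
  obtain ⟨a0, ha0⟩ : Y.Nonempty := by rw [← card_pos]; omega
  set 𝒞 := 𝓑.filter (fun C => a0 ∉ C ∧ (Y ∩ C).card = d + i) with h𝒞
  have hE : (Y.erase a0).card = d + 2 * i := by rw [card_erase_of_mem ha0]; omega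
  have key : ∀ C ∈ 𝒞, ∀ D ∈ 𝒞, C ≠ D → (Y ∩ C) ∪ (Y ∩ D) = Y.erase a0 ∧ C ∩ D ⊆ Y := by
    intro C hC D hD hne
    simp only [h𝒞, mem_filter] at hC hD
    have h1 := hd C hC.1 D hD.1 hne
    have h2 := card_union_add_card_inter (Y ∩ C) (Y ∩ D)
    have h3 : (Y ∩ C) ∪ (Y ∩ D) ⊆ Y.erase a0 := by
      have p1 := hC.2.1
      have p2 := hD.2.1
      clear hd hk hcov hno hC hD
      grind
    have h4 : (Y ∩ C) ∩ (Y ∩ D) ⊆ C ∩ D := by clear hd hk hcov hno hC hD; grind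
    have h5 := card_le_card h3
    have h6 := card_le_card h4
    refine ⟨eq_of_subset_of_card_le h3 (by omega), ?_⟩
    have h7 := eq_of_subset_of_card_le h4 (by omega)
    rw [← h7]; clear hd hk hcov hno hC hD; grind
  have hun : 𝒞.biUnion (fun C => (Y \ C).erase a0) = Y.erase a0 := by
    ext b
    simp only [mem_biUnion, mem_erase, mem_sdiff]
    constructor
    · rintro ⟨C, hC, h⟩; exact ⟨h.1, h.2.1⟩
    · rintro ⟨hb0, hbY⟩
      have hX : ((Y.erase a0).erase b).card = d + 2 * i - 1 := by
        rw [card_erase_of_mem (by simp [hb0, hbY]), hE]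
      obtain ⟨C, hC, hc⟩ := hcov _ hX
      have h1 := hno C hC
      have hsub : (Y.erase a0).erase b ∩ C ⊆ Y ∩ C := by clear hd hk hcov hno; grind
      have h2 := card_le_card hsub
      have h3 := eq_of_subset_of_card_le hsub (by omega)
      have ha : a0 ∉ C := by
        intro h
        have : a0 ∈ Y ∩ C := by simp [h, ha0]
        rw [← h3] at this; simp at this
      have hb : b ∉ C := by
        intro h
        have : b ∈ Y ∩ C := by simp [h, hbY]
        rw [← h3] at this; simp at this
      exact ⟨C, by simp only [h𝒞, mem_filter]; exact ⟨hC, ha, by omega⟩, hb0, hbY, hb⟩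
  have hc1 : 𝒞.card * i = d + 2 * i := by
    rw [← hE, ← hun, card_biUnion]
    · rw [sum_const_nat (m := i)]
      intro C hC
      simp only [h𝒞, mem_filter] at hC
      rw [card_erase_of_mem (by simp [ha0, hC.2.1])]
      have := card_sdiff_add_card_inter Y C
      omega
    · intro C hC D hD hne
      rw [Function.onFun, Finset.disjoint_left]
      clear hd hk hcov hno
      intro x hx hx'
      have h := (key C hC D hD hne).1
      have : x ∈ Y.erase a0 := by grind
      rw [← h] at this
      grind
  have hc2 : 𝒞.card * (k - d - i) ≤ v - (d + 2 * i + 1) := by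
    have h1 : (𝒞.biUnion (fun C => C \ Y)).card ≤ Yᶜ.card := by
      apply card_le_card
      intro x; simp only [mem_biUnion, mem_sdiff, mem_compl]
      rintro ⟨C, -, h⟩; exact h.2
    rw [card_compl, hv, hY, card_biUnion] at h1
    · rw [sum_const_nat (m := k - d - i)] at h1
      · exact h1
      intro C hC
      simp only [h𝒞, mem_filter] at hC
      have := card_sdiff_add_card_inter C Y
      rw [inter_comm, hC.2.2, hk C hC.1] at this
      omega
    · intro C hC D hD hne
      rw [Function.onFun, Finset.disjoint_left]
      clear hd hk hcov hno
      intro x hx hx'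
      have h := (key C hC D hD hne).2
      grind
  calc (d + 2 * i) * (k - d - i) = i * (𝒞.card * (k - d - i)) := by rw [← hc1]; ring
    _ ≤ _ := Nat.mul_le_mul_left _ hc2

lemma step_two {𝓑 : Finset (Finset α)} {v k d i : ℕ} (hv : Fintype.card α = v)
    (hk : ∀ B ∈ 𝓑, B.card = k)
    (hd : ∀ B ∈ 𝓑, ∀ C ∈ 𝓑, B ≠ C → (B ∩ C).card ≤ d)
    (hi : 1 ≤ i) (hkd : d + i ≤ k) (hvk : k + i ≤ v + 1)
    (hcov : ∀ X : Finset α, X.card = d + 2 * i - 1 → ∃ B ∈ 𝓑, d + i ≤ (X ∩ B).card)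
    (B : Finset α) (hB : B ∈ 𝓑) :
    (v + 1 - (k + i)) * (i - 1) ≤ (k - d - i + 1) * (d + i - 1) := by
  obtain ⟨J, hJB, hJ⟩ := exists_subset_card_eq (s := B) (n := k - d - i + 1)
    (by rw [hk B hB]; omega)
  have hBc : Bᶜ.card = v - k := by rw [card_compl, hv, hk B hB]
  obtain ⟨I, hIB, hI⟩ := exists_subset_card_eq (s := Bᶜ) (n := i - 1) (by omega)
  have hBk := hk B hB
  have hIB2 : ∀ x ∈ I, x ∉ B := fun x hx => by simpa using hIB hx
  have hJBc : (B \ J).card = d + i - 1 := by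
    rw [card_sdiff_of_subset hJB]; omega
  set 𝒞 := 𝓑.filter (fun C => C ≠ B ∧ I ⊆ C ∧ Disjoint C J ∧ (C ∩ B).card = d) with h𝒞
  have key : ∀ C ∈ 𝒞, ∀ D ∈ 𝒞, C ≠ D → (C ∩ D) \ B ⊆ I ∧ B \ J ⊆ C ∪ D := by
    intro C hC D hD hne
    simp only [h𝒞, mem_filter] at hC hD
    obtain ⟨hC1, -, hC2, hC3, hC4⟩ := hC
    obtain ⟨hD1, -, hD2, hD3, hD4⟩ := hD
    have h1 := hd C hC1 D hD1 hne
    have h2 := card_union_add_card_inter (C ∩ B) (D ∩ B)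
    have h3 : (C ∩ B) ∪ (D ∩ B) ⊆ B \ J := by
      intro x hx
      have := fun (h : x ∈ _) => Finset.disjoint_left.1 hC3 h
      have := fun (h : x ∈ _) => Finset.disjoint_left.1 hD3 h
      (clear hd hk hcov; grind)
    have h4 := card_le_card h3
    have h5 : I ∪ ((C ∩ B) ∩ (D ∩ B)) ⊆ C ∩ D := by (clear hd hk hcov; grind)
    have h6 := card_le_card h5
    have h7 : (I ∪ ((C ∩ B) ∩ (D ∩ B))).card = I.card + ((C ∩ B) ∩ (D ∩ B)).card := by
      apply card_union_of_disjoint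
      rw [Finset.disjoint_left]; (clear hd hk hcov; grind)
    have h8 := eq_of_subset_of_card_le h5 (by omega)
    have h9 := eq_of_subset_of_card_le h3 (by omega)
    constructor
    · rw [← h8]; (clear hd hk hcov; grind)
    · rw [← h9]; (clear hd hk hcov; grind)
  have hun : 𝒞.biUnion (fun C => (C \ B) \ I) = Bᶜ \ I := by
    ext x
    simp only [mem_biUnion, mem_compl, mem_sdiff]
    constructor
    · rintro ⟨C, hC, h⟩; exact ⟨h.1.2, h.2⟩
    · rintro ⟨hxB, hxI⟩
      have hd1 : Disjoint (B \ J) (insert x I) := by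
        rw [Finset.disjoint_left]; (clear hd hk hcov key; grind)
      have hX : ((B \ J) ∪ insert x I).card = d + 2 * i - 1 := by
        rw [card_union_of_disjoint hd1, card_insert_of_notMem hxI, hJBc, hI]
        omega
      obtain ⟨C, hC, hc⟩ := hcov _ hX
      have hCB : C ≠ B := by
        rintro rfl
        have : ((C \ J) ∪ insert x I) ∩ C ⊆ C \ J := by (clear hd hk hcov key; grind)
        have := card_le_card this
        omega
      have e1 : ((B \ J) ∪ insert x I) ∩ C = ((B \ J) ∩ C) ∪ (insert x I ∩ C) := union_inter_distrib_right _ _ _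
      have e2 := card_union_le ((B \ J) ∩ C) (insert x I ∩ C)
      rw [e1] at hc
      have e3 : (insert x I ∩ C) ⊆ insert x I := inter_subset_left
      have e4 := card_le_card e3
      rw [card_insert_of_notMem hxI] at e4
      have e5 : (B \ J) ∩ C ⊆ C ∩ B := by (clear hd hk hcov key; grind)
      have e6 := card_le_card e5
      have e7 := hd C hC B hB hCB
      have e8 := eq_of_subset_of_card_le e3 (by rw [card_insert_of_notMem hxI]; omega)
      have e9 := eq_of_subset_of_card_le e5 (by omega)
      refine ⟨C, ?_, ⟨?_, hxB⟩, hxI⟩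
      · simp only [h𝒞, mem_filter]
        refine ⟨hC, hCB, ?_, ?_, by omega⟩
        · intro y hy
          have : y ∈ insert x I := by simp [hy]
          rw [← e8] at this; (clear hd hk hcov key; grind)
        · rw [Finset.disjoint_left]
          intro y hy hyJ
          have : y ∈ C ∩ B := by simp [hy, hJB hyJ]
          rw [← e9] at this; (clear hd hk hcov key; grind)
      · have : x ∈ insert x I := by simp
        rw [← e8] at this; (clear hd hk hcov key; grind)
  have hc1 : 𝒞.card * (k - d - i + 1) = v + 1 - (k + i) := by
    have : (Bᶜ \ I).card = v + 1 - (k + i) := by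
      rw [card_sdiff_of_subset hIB]; omega
    rw [← this, ← hun, card_biUnion]
    · rw [sum_const_nat (m := k - d - i + 1)]
      intro C hC
      simp only [h𝒞, mem_filter] at hC
      have h1 : I ⊆ C \ B := by (clear hd hk hcov key hun; grind)
      rw [card_sdiff_of_subset h1]
      have := card_sdiff_add_card_inter C B
      rw [hk C hC.1] at this
      omega
    · intro C hC D hD hne
      rw [Function.onFun, Finset.disjoint_left]
      intro x hx hx'
      have h := (key C hC D hD hne).1
      (clear hd hk hcov key hun; grind)
  have hc2 : 𝒞.card * (i - 1) ≤ d + i - 1 := by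
    have h1 : (𝒞.biUnion (fun C => (B \ J) \ C)).card ≤ (B \ J).card := by
      apply card_le_card
      intro x; simp only [mem_biUnion, mem_sdiff]
      rintro ⟨C, -, h⟩; exact h.1
    rw [hJBc, card_biUnion] at h1
    · rw [sum_const_nat (m := i - 1)] at h1
      · exact h1
      intro C hC
      simp only [h𝒞, mem_filter] at hC
      have h2 := card_sdiff_add_card_inter (B \ J) C
      have h3 : (B \ J) ∩ C = C ∩ B := by
        ext y
        have := fun (h : y ∈ _) => Finset.disjoint_left.1 hC.2.2.2.1 h
        (clear hd hk hcov key hun; grind)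
      rw [h3] at h2
      omega
    · intro C hC D hD hne
      rw [Function.onFun, Finset.disjoint_left]
      intro x hx hx'
      have h := (key C hC D hD hne).2
      (clear hd hk hcov key hun; grind)
  calc _ = (k - d - i + 1) * (𝒞.card * (i - 1)) := by rw [← hc1]; ring
    _ ≤ _ := Nat.mul_le_mul_left _ hc2

/-- Up operator. -/
def upOp (f : Finset α → ℝ) (Z : Finset α) : ℝ := ∑ x ∈ Z, f (Z.erase x)

/-- Down operator. -/
def dnOp (g : Finset α → ℝ) (X : Finset α) : ℝ := ∑ s ∈ Xᶜ, g (insert s X)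

lemma up_dn_adj (f g : Finset α → ℝ) :
    ∑ Z, upOp f Z * g Z = ∑ X, f X * dnOp g X := by
  simp only [upOp, dnOp, sum_mul, mul_sum]
  rw [sum_sigma', sum_sigma']
  refine sum_bij' (fun p _ => ⟨p.1.erase p.2, p.2⟩) (fun p _ => ⟨insert p.2 p.1, p.2⟩) ?_ ?_ ?_ ?_ ?_
  · rintro ⟨Z, x⟩ h; simp
  · rintro ⟨Z, x⟩ h; simp
  · rintro ⟨Z, x⟩ h
    simp only [mem_sigma, mem_univ, true_and] at h
    simp [insert_erase h]
  · rintro ⟨Z, x⟩ h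
    simp only [mem_sigma, mem_univ, true_and, mem_compl] at h
    simp [erase_insert h]
  · rintro ⟨Z, x⟩ h
    simp only [mem_sigma, mem_univ, true_and] at h
    simp [insert_erase h]

lemma dn_up_apply (f : Finset α → ℝ) (X : Finset α) :
    dnOp (upOp f) X = (Xᶜ.card : ℝ) * f X + ∑ s ∈ Xᶜ, ∑ x ∈ X, f ((insert s X).erase x) := by
  simp only [dnOp, upOp]
  rw [← nsmul_eq_mul, ← sum_const, ← sum_add_distrib]
  apply sum_congr rfl
  intro s hs
  rw [mem_compl] at hs
  rw [sum_insert hs, erase_insert hs]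

lemma up_dn_apply (f : Finset α → ℝ) (X : Finset α) :
    upOp (dnOp f) X = (X.card : ℝ) * f X + ∑ s ∈ Xᶜ, ∑ x ∈ X, f ((insert s X).erase x) := by
  simp only [dnOp, upOp]
  rw [sum_comm, ← nsmul_eq_mul, ← sum_const, ← sum_add_distrib]
  apply sum_congr rfl
  intro x hx
  have h1 : (X.erase x)ᶜ = insert x Xᶜ := by
    ext y; simp only [mem_compl, mem_erase, mem_insert]; tauto
  rw [h1, sum_insert (by simpa using hx), insert_erase hx]
  congr 1
  apply sum_congr rfl
  intro s hs
  rw [mem_compl] at hs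
  have : s ≠ x := by rintro rfl; exact hs hx
  rw [erase_insert_of_ne this]

lemma dn_up_comm (f : Finset α → ℝ) (X : Finset α) :
    dnOp (upOp f) X = upOp (dnOp f) X + ((Fintype.card α : ℝ) - 2 * X.card) * f X := by
  rw [dn_up_apply, up_dn_apply, card_compl, Nat.cast_sub (card_le_univ X)]
  ring

lemma norm_up {h : Finset α → ℝ} {c : ℝ} (H : ∀ X, dnOp (upOp h) X = c * h X) :
    ∑ X, (upOp h X) ^ 2 = c * ∑ X, (h X) ^ 2 := by
  simp only [pow_two]
  rw [up_dn_adj, mul_sum]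
  apply sum_congr rfl
  intro X _
  rw [H]; ring

lemma up_supp {h : Finset α → ℝ} {m : ℕ} (S : ∀ X, X.card ≠ m → h X = 0) (X : Finset α)
    (hX : X.card ≠ m + 1) : upOp h X = 0 := by
  apply sum_eq_zero
  intro x hx
  apply S
  rw [card_erase_of_mem hx]
  have : 0 < X.card := card_pos.2 ⟨x, hx⟩
  omega

lemma up_eig {h : Finset α → ℝ} {c : ℝ} {m : ℕ} (H : ∀ X, dnOp (upOp h) X = c * h X)
    (S : ∀ X, X.card ≠ m → h X = 0) (X : Finset α) :
    dnOp (upOp (upOp h)) X = (c + (Fintype.card α : ℝ) - 2 * (m + 1)) * upOp h X := by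
  rw [dn_up_comm]
  have h1 : dnOp (upOp h) = fun X => c * h X := funext H
  rw [h1]
  have h2 : upOp (fun X => c * h X) X = c * upOp h X := by
    simp only [upOp, mul_sum]
  rw [h2]
  by_cases hX : X.card = m + 1
  · rw [hX]; push_cast; ring
  · rw [up_supp S X hX]; ring

lemma zero_of_norm {h : Finset α → ℝ} {c : ℝ} (hc : c ≠ 0)
    (H : ∀ X, dnOp (upOp h) X = c * h X) (hz : ∀ X, upOp h X = 0) (X : Finset α) : h X = 0 := by
  have := norm_up H
  simp only [hz] at this
  have h2 : ∑ X, (h X) ^ 2 = 0 := by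
    have t : c = 0 ∨ ∑ X, (h X) ^ 2 = 0 := by simpa using this.symm
    exact t.resolve_left hc
  rw [sum_eq_zero_iff_of_nonneg (fun _ _ => sq_nonneg _)] at h2
  exact pow_eq_zero_iff (two_ne_zero) |>.1 (h2 X (mem_univ _))

lemma no_eig {f : Finset α → ℝ} {μ : ℝ} {w : ℕ} (hf : ∀ X, X.card ≠ w → f X = 0)
    (H : ∀ X : Finset α, X.card = w → dnOp (upOp f) X = μ * f X)
    (h0 : (Fintype.card α : ℝ) < 2 * w + 2)
    (h1 : 2 * (w : ℝ) - Fintype.card α + 2 < μ)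
    (h2 : μ < 2 * (2 * (w : ℝ) - Fintype.card α) + 6) (X : Finset α) : f X = 0 := by
  have H' : ∀ X, dnOp (upOp f) X = μ * f X := by
    intro X
    by_cases hX : X.card = w
    · exact H X hX
    · rw [hf X hX, mul_zero]
      apply sum_eq_zero
      intro s hs
      apply up_supp hf
      rw [mem_compl] at hs
      rw [card_insert_of_notMem hs]; omega
  have S1 := up_supp hf
  have E1 := up_eig H' hf
  have S2 := up_supp S1
  have E2 := up_eig E1 S1
  have z2 : ∀ X, upOp (upOp f) X = 0 := by
    intro X
    have n := norm_up E2
    have p1 : 0 ≤ ∑ X, (upOp (upOp (upOp f)) X) ^ 2 := sum_nonneg (fun _ _ => sq_nonneg _)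
    have p2 : 0 ≤ ∑ X, (upOp (upOp f) X) ^ 2 := sum_nonneg (fun _ _ => sq_nonneg _)
    push_cast at n
    have p3 : ∑ X, (upOp (upOp f) X) ^ 2 = 0 := by nlinarith
    rw [sum_eq_zero_iff_of_nonneg (fun _ _ => sq_nonneg _)] at p3
    exact pow_eq_zero_iff (two_ne_zero) |>.1 (p3 X (mem_univ _))
  have z1 := zero_of_norm (by linarith) E1 z2
  exact zero_of_norm (by linarith) H' z1 X

/-- Partial sums of the weighted radial eigenfunction. -/
noncomputable def ptl (k w q ω : ℝ) : ℕ → ℝ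
  | 0 => 0
  | 1 => 1
  | n + 2 => (((q + n + 1) * (n + 1) + (k - n) * (w - n) - ω) * ptl k w q ω (n + 1)
      - (k - n) * (w - n) * ptl k w q ω n) / ((q + n + 1) * (n + 1))

lemma ptl_step (k w q ω : ℝ) (hq : 0 ≤ q) (n : ℕ) :
    (q + n + 1) * (n + 1) * ptl k w q ω (n + 2) =
    ((q + n + 1) * (n + 1) + (k - n) * (w - n) - ω) * ptl k w q ω (n + 1)
      - (k - n) * (w - n) * ptl k w q ω n := by
  have h : (q + n + 1) * ((n : ℝ) + 1) ≠ 0 := by positivity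
  rw [ptl]
  field_simp

lemma ptl_cont (k w q : ℝ) (n : ℕ) : Continuous (fun ω => ptl k w q ω n) ∧
    Continuous (fun ω => ptl k w q ω (n + 1)) := by
  induction n with
  | zero => simp only [ptl]; exact ⟨continuous_const, continuous_const⟩
  | succ n ih =>
    refine ⟨ih.2, ?_⟩
    obtain ⟨h1, h2⟩ := ih
    simp only [ptl]
    fun_prop

/-- Shifted binomial coefficients. -/
def bsh (J : ℕ) : ℕ → ℝ
  | 0 => 0
  | 1 => 0
  | 2 => 0
  | n + 3 => (J.choose n : ℝ)

lemma bsh_rel (J m : ℕ) : ((m : ℝ) - 2) * bsh J (m + 1) - ((J : ℝ) - m + 3) * bsh J m = 0 := by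
  match m with
  | 0 => simp [bsh]
  | 1 => simp [bsh]
  | 2 => simp [bsh]
  | n + 3 =>
    simp only [bsh]
    have h := Nat.choose_succ_right_eq J n
    rcases le_or_gt n J with hn | hn
    · have h' : (J.choose (n + 1) : ℝ) * (n + 1) = J.choose n * ((J : ℝ) - n) := by
        rw [← Nat.cast_sub hn]; exact_mod_cast h
      push_cast
      linear_combination h'
    · rw [Nat.choose_eq_zero_of_lt hn, Nat.choose_eq_zero_of_lt (by omega)]
      simp

lemma ptl_closed (k w q ω A B C : ℝ) (hq : 0 ≤ q) (J : ℕ) (hA : A ≠ 0)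
    (I : ∀ n : ℕ, (q + n + 1) * (n + 1) * (A * bsh J (n + 4) - B * bsh J (n + 3) + C * bsh J (n + 2))
      + ((q + n + 1) * (n + 1) + (k - n) * (w - n) - ω) *
        (A * bsh J (n + 3) - B * bsh J (n + 2) + C * bsh J (n + 1))
      + (k - n) * (w - n) * (A * bsh J (n + 2) - B * bsh J (n + 1) + C * bsh J n) = 0) (n : ℕ) :
    A * ptl k w q ω n = (-1) ^ (n + 1) * (A * bsh J (n + 2) - B * bsh J (n + 1) + C * bsh J n) ∧
    A * ptl k w q ω (n + 1) =
      (-1) ^ n * (A * bsh J (n + 3) - B * bsh J (n + 2) + C * bsh J (n + 1)) := by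
  induction n with
  | zero => simp [ptl, bsh]
  | succ n ih =>
    obtain ⟨h1, h2⟩ := ih
    refine ⟨by rw [h2]; ring, ?_⟩
    have h := ptl_step k w q ω hq n
    have hne : (q + n + 1) * ((n : ℝ) + 1) ≠ 0 := by positivity
    apply mul_left_cancel₀ hne
    have hI := I n
    have e : n + 1 + 1 = n + 2 := rfl
    rw [show n + 1 + 1 = n + 2 from rfl, show n + 1 + 3 = n + 4 from rfl,
      show n + 1 + 2 = n + 3 from rfl]
    have hp : ((-1 : ℝ)) ^ (n + 1) = - (-1) ^ n := by ring
    rw [hp] at h1 ⊢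
    linear_combination A * h + ((q + n + 1) * (n + 1) + (k - n) * (w - n) - ω) * h2
      - (k - n) * (w - n) * h1 + (-1) ^ n * hI

lemma closed_one (k q : ℝ) (hq : 0 ≤ q) (J n : ℕ) :
    (q + 1) * ptl k (J + 2) q ((J + 1) * (k + q + 2)) (n + 1) =
      (-1) ^ n * ((q + 1) * bsh J (n + 3) - (k - J - 1) * bsh J (n + 2)) := by
  have := (ptl_closed k (J + 2) q ((J + 1) * (k + q + 2)) (q + 1) (k - J - 1) 0 hq J
    (by positivity) ?_ n).2
  · rw [this]; ring
  intro n
  have r3 := bsh_rel J (n + 3)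
  have r2 := bsh_rel J (n + 2)
  have r1 := bsh_rel J (n + 1)
  push_cast at r1 r2 r3
  linear_combination ((q + n + 1) * (q + 1)) * r3
    + ((q + 1) * (n - k - 1) - (k - J - 1) * (n + q + 2)) * r2 + ((k - J - 1) * (k - n)) * r1

lemma closed_two (k q : ℝ) (hq : 0 ≤ q) (J n : ℕ) :
    (q + 2) * (q + 1) / 2 * ptl k (J + 3) q ((J + 1) * (k + q + 3)) (n + 1) =
      (-1) ^ n * ((q + 2) * (q + 1) / 2 * bsh J (n + 3) - (q + 2) * (k - J - 1) * bsh J (n + 2)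
        + (k - J - 1) * (k - J - 2) / 2 * bsh J (n + 1)) := by
  refine (ptl_closed k (J + 3) q ((J + 1) * (k + q + 3)) ((q + 2) * (q + 1) / 2)
    ((q + 2) * (k - J - 1)) ((k - J - 1) * (k - J - 2) / 2) hq J
    (by positivity) ?_ n).2
  intro n
  have r3 := bsh_rel J (n + 3)
  have r2 := bsh_rel J (n + 2)
  have r1 := bsh_rel J (n + 1)
  have r0 := bsh_rel J n
  push_cast at r1 r2 r3
  linear_combination ((q + n + 1) * ((q + 2) * (q + 1) / 2)) * r3
    + ((q + 2) * (q + 1) / 2 * (n - k - 2) - (q + 2) * (k - J - 1) * (n + q + 2)) * r2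
    + ((k - J - 1) * (k - J - 2) / 2 * (n + q + 3) + (q + 2) * (k - J - 1) * (k - n + 1)) * r1
    - (k - n) * ((k - J - 1) * (k - J - 2) / 2) * r0

lemma quad_neg (q a x D : ℝ) (hq : 1 < q) (ha : 1 < a) (hx : 0 < x) (hD : 0 < D)
    (h1 : a * D < (q + 1) * x) (h2 : (q - 1) * x < (a + 1) * D)
    (hK : 0 ≤ (a - 1) * q ^ 2 + (a ^ 2 - 6 * a - 3) * q - (7 * a ^ 2 + 7 * a + 2)) :
    (q + 2) * (q + 1) * (x * (x - 1)) - 2 * a * (q + 2) * D * x + a * (a - 1) * (D * (D - 1)) < 0 := by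
  have p1 : 0 < (q + 1) * x - a * D := by linarith
  have p2 : 0 < (a + 1) * D - (q - 1) * x := by linarith
  have q1 : 0 < q - 1 := by linarith
  have a1 : 0 < a - 1 := by linarith
  set hom := (q + 2) * (q + 1) * x ^ 2 - 2 * a * (q + 2) * x * D + a * (a - 1) * D ^ 2 with hh
  have key : hom * ((q - 1) * (q + 2 * a + 1)) =
      - ((q + 2) * ((q + 1) * x - a * D) * ((a + 1) * D - (q - 1) * x) * (q + 2 * a + 1)
        + D * (a * (a + q + 1) * (q - 1) * ((a + 1) * D - (q - 1) * x)
          + ((a - 1) * q ^ 2 + (a ^ 2 - 6 * a - 3) * q - (7 * a ^ 2 + 7 * a + 2))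
            * ((q + 1) * x - a * D))) := by
    rw [hh]; ring
  have hneg : hom * ((q - 1) * (q + 2 * a + 1)) < 0 := by
    rw [key, neg_lt_zero]
    have t1 : 0 < (q + 2) * ((q + 1) * x - a * D) * ((a + 1) * D - (q - 1) * x) * (q + 2 * a + 1) := by
      have : 0 < q + 2 := by linarith
      have : 0 < q + 2 * a + 1 := by linarith
      positivity
    have t2 : 0 ≤ a * (a + q + 1) * (q - 1) * ((a + 1) * D - (q - 1) * x) := by
      have : 0 < a + q + 1 := by linarith
      positivity
    have t3 := mul_nonneg hK p1.le
    have t4 := mul_nonneg hD.le (add_nonneg t2 t3)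
    linarith
  have hn : hom < 0 := by
    by_contra hc
    have : 0 ≤ hom * ((q - 1) * (q + 2 * a + 1)) := by
      have : 0 < q + 2 * a + 1 := by linarith
      have := not_lt.1 hc
      positivity
    linarith
  have e1 : 0 < (q + 2) * (q + 1) * x := by positivity
  have e2 : 0 < a * (a - 1) * D := by positivity
  have : (q + 2) * (q + 1) * (x * (x - 1)) - 2 * a * (q + 2) * D * x + a * (a - 1) * (D * (D - 1))
    = hom - (q + 2) * (q + 1) * x - a * (a - 1) * D := by rw [hh]; ring
  rw [this]; linarith

lemma exists_root (d e q a : ℕ) (hq : 2 ≤ q) (ha : 2 ≤ a)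
    (h1 : a * d + (q + a + 1) ≤ (q + a + 1) * e) (h2 : (q + a) * e ≤ (a + 1) * d)
    (hK : 0 ≤ ((a : ℝ) - 1) * q ^ 2 + ((a : ℝ) ^ 2 - 6 * a - 3) * q - (7 * (a : ℝ) ^ 2 + 7 * a + 2)) :
    ∃ ω : ℝ, ptl (d + q + 2 * a + 1) (e + 2 * a + 1) q ω (a + 1) = 0 ∧
      ((e : ℝ) + 2 * a - 1) * (d + 2 * q + 2 * a + 4) < ω ∧
      ω < ((e : ℝ) + 2 * a) * (d + 2 * q + 2 * a + 3) := by
  have hqR : (2 : ℝ) ≤ q := by exact_mod_cast hq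
  have haR : (2 : ℝ) ≤ a := by exact_mod_cast ha
  have h1R : (a : ℝ) * d + (q + a + 1) ≤ (q + a + 1) * e := by exact_mod_cast h1
  have h2R : ((q : ℝ) + a) * e ≤ (a + 1) * d := by exact_mod_cast h2
  have d0 : (0 : ℝ) ≤ d := by positivity
  have e0 : (0 : ℝ) ≤ e := by positivity
  obtain ⟨c, rfl⟩ : ∃ c, a = c + 2 := ⟨a - 2, by omega⟩
  -- sign at the first endpoint
  have s1 : 0 < (-1 : ℝ) ^ (c + 2) * ptl (d + q + 2 * (c + 2 : ℕ) + 1) (e + 2 * (c + 2 : ℕ) + 1) q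
      (((e : ℝ) + 2 * (c + 2 : ℕ)) * (d + 2 * q + 2 * (c + 2 : ℕ) + 3)) (c + 2 + 1) := by
    have h := closed_one ((d : ℝ) + q + 2 * (c + 2 : ℕ) + 1) q (by positivity) (e + 2 * c + 3) (c + 2)
    have r := bsh_rel (e + 2 * c + 3) (c + 2 + 2)
    have hb : 0 < bsh (e + 2 * c + 3) (c + 2 + 2) := by
      have : bsh (e + 2 * c + 3) (c + 2 + 2) = ((e + 2 * c + 3).choose (c + 1) : ℝ) := rfl
      rw [this]; exact_mod_cast Nat.choose_pos (by omega)
    have ea : ((e + 2 * c + 3 : ℕ) : ℝ) + 2 = e + 2 * (c + 2 : ℕ) + 1 := by push_cast; ring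
    have eb : (((e + 2 * c + 3 : ℕ) : ℝ) + 1) * ((d : ℝ) + q + 2 * (c + 2 : ℕ) + 1 + q + 2)
      = ((e : ℝ) + 2 * (c + 2 : ℕ)) * (d + 2 * q + 2 * (c + 2 : ℕ) + 3) := by push_cast; ring
    rw [ea, eb] at h
    rw [show c + 2 + 2 + 1 = c + 2 + 3 from rfl] at r
    set T := ptl (d + q + 2 * (c + 2 : ℕ) + 1) (e + 2 * (c + 2 : ℕ) + 1) q
      (((e : ℝ) + 2 * (c + 2 : ℕ)) * (d + 2 * q + 2 * (c + 2 : ℕ) + 3)) (c + 2 + 1)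
    set b3 := bsh (e + 2 * c + 3) (c + 2 + 3)
    set b2 := bsh (e + 2 * c + 3) (c + 2 + 2)
    have hs : ((-1 : ℝ) ^ (c + 2)) * (-1) ^ (c + 2) = 1 := by
      rw [← mul_pow]; simp
    push_cast at h r h1R haR
    have m : ((c : ℝ) + 2) * (q + 1) * ((-1 : ℝ) ^ (c + 2) * T) =
        b2 * (((q : ℝ) + (c + 2) + 1) * e - (c + 2) * d) := by
      linear_combination ((c : ℝ) + 2) * (-1 : ℝ) ^ (c + 2) * h + (q + 1) * r +
        ((c : ℝ) + 2) * ((q + 1) * b3 - ((d : ℝ) + q + 2 * (c + 2) + 1 - (e + 2 * c + 3) - 1) * b2) * hs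
    have pos : 0 < b2 * (((q : ℝ) + (c + 2) + 1) * e - (c + 2) * d) := by
      apply mul_pos hb; linarith
    rw [← m] at pos
    exact pos_of_mul_pos_right pos (by positivity)
  have s2 : (-1 : ℝ) ^ (c + 2) * ptl (d + q + 2 * (c + 2 : ℕ) + 1) (e + 2 * (c + 2 : ℕ) + 1) q
      (((e : ℝ) + 2 * (c + 2 : ℕ) - 1) * (d + 2 * q + 2 * (c + 2 : ℕ) + 4)) (c + 2 + 1) < 0 := by
    have h := closed_two ((d : ℝ) + q + 2 * (c + 2 : ℕ) + 1) q (by positivity) (e + 2 * c + 2) (c + 2)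
    have r := bsh_rel (e + 2 * c + 2) (c + 2 + 2)
    have r' := bsh_rel (e + 2 * c + 2) (c + 2 + 1)
    have hb : 0 < bsh (e + 2 * c + 2) (c + 2 + 1) := by
      have : bsh (e + 2 * c + 2) (c + 2 + 1) = ((e + 2 * c + 2).choose c : ℝ) := rfl
      rw [this]; exact_mod_cast Nat.choose_pos (by omega)
    have ea : ((e + 2 * c + 2 : ℕ) : ℝ) + 3 = e + 2 * (c + 2 : ℕ) + 1 := by push_cast; ring
    have eb : (((e + 2 * c + 2 : ℕ) : ℝ) + 1) * ((d : ℝ) + q + 2 * (c + 2 : ℕ) + 1 + q + 3)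
      = ((e : ℝ) + 2 * (c + 2 : ℕ) - 1) * (d + 2 * q + 2 * (c + 2 : ℕ) + 4) := by push_cast; ring
    rw [ea, eb] at h
    rw [show c + 2 + 2 + 1 = c + 2 + 3 from rfl] at r
    rw [show c + 2 + 1 + 1 = c + 2 + 2 from rfl] at r'
    set T := ptl (d + q + 2 * (c + 2 : ℕ) + 1) (e + 2 * (c + 2 : ℕ) + 1) q
      (((e : ℝ) + 2 * (c + 2 : ℕ) - 1) * (d + 2 * q + 2 * (c + 2 : ℕ) + 4)) (c + 2 + 1)
    set b3 := bsh (e + 2 * c + 2) (c + 2 + 3)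
    set b2 := bsh (e + 2 * c + 2) (c + 2 + 2)
    set b1 := bsh (e + 2 * c + 2) (c + 2 + 1)
    have hs : ((-1 : ℝ) ^ (c + 2)) * (-1) ^ (c + 2) = 1 := by
      rw [← mul_pow]; simp
    have G := quad_neg q (c + 2 : ℕ) (e + (c + 2 : ℕ)) (d - e + q + 2) (by linarith) (by linarith)
      (by positivity) (by nlinarith) (by nlinarith) (by nlinarith) hK
    push_cast at h r r' haR G
    set D : ℝ := (d : ℝ) - e + q + 2 with hD
    have hD' : (d : ℝ) + q + 2 * (c + 2) + 1 - (e + 2 * c + 2) - 1 = D := by rw [hD]; ring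
    have hD'' : (d : ℝ) + q + 2 * (c + 2) + 1 - (e + 2 * c + 2) - 2 = D - 1 := by rw [hD]; ring
    rw [hD', hD''] at h
    have m : ((c : ℝ) + 2) * (c + 1) * (q + 2) * (q + 1) * ((-1 : ℝ) ^ (c + 2) * T) =
        b1 * (((q : ℝ) + 2) * (q + 1) * ((e + (c + 2)) * (e + (c + 2) - 1))
          - 2 * (c + 2) * (q + 2) * D * (e + (c + 2)) + (c + 2) * (c + 2 - 1) * (D * (D - 1))) := by
      linear_combination 2 * ((c : ℝ) + 2) * (c + 1) * (-1 : ℝ) ^ (c + 2) * h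
        + (c + 1) * (q + 2) * (q + 1) * r
        + ((q + 2) * (q + 1) * (e + c + 1) - 2 * (q + 2) * D * (c + 2)) * r'
        + 2 * ((c : ℝ) + 2) * (c + 1) * (((q : ℝ) + 2) * (q + 1) / 2 * b3 - (q + 2) * D * b2
            + D * (D - 1) / 2 * b1) * hs
    have neg : b1 * (((q : ℝ) + 2) * (q + 1) * ((e + (c + 2)) * (e + (c + 2) - 1))
          - 2 * (c + 2) * (q + 2) * D * (e + (c + 2)) + (c + 2) * (c + 2 - 1) * (D * (D - 1))) < 0 :=
      mul_neg_of_pos_of_neg hb G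
    rw [← m] at neg
    by_contra hc
    have hc' := not_lt.1 hc
    have : 0 ≤ ((c : ℝ) + 2) * (c + 1) * (q + 2) * (q + 1) * ((-1 : ℝ) ^ (c + 2) * T) := by
      apply mul_nonneg (by positivity) hc'
    linarith
  have hcont := (ptl_cont ((d : ℝ) + q + 2 * (c + 2 : ℕ) + 1) (e + 2 * (c + 2 : ℕ) + 1) q (c + 2)).2
  have hlt : ((e : ℝ) + 2 * (c + 2 : ℕ) - 1) * (d + 2 * q + 2 * (c + 2 : ℕ) + 4) ≤
      ((e : ℝ) + 2 * (c + 2 : ℕ)) * (d + 2 * q + 2 * (c + 2 : ℕ) + 3) := by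
    nlinarith
  have hcont2 : Continuous (fun ω => (-1 : ℝ) ^ (c + 2) *
      ptl (d + q + 2 * (c + 2 : ℕ) + 1) (e + 2 * (c + 2 : ℕ) + 1) q ω (c + 2 + 1)) := by
    fun_prop
  obtain ⟨ω, hω, hz⟩ := intermediate_value_Ioo hlt hcont2.continuousOn ⟨s2, s1⟩
  refine ⟨ω, ?_, hω.1, hω.2⟩
  rcases mul_eq_zero.1 hz with h | h
  · exact absurd h (by simp)
  · exact h

lemma radial (k w q a : ℕ) (ω : ℝ) (hk : a + 1 ≤ k) (hw : a + 1 ≤ w)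
    (hroot : ptl k w q ω (a + 1) = 0) :
    ∃ t : ℕ → ℝ, t 0 ≠ 0 ∧ ∀ r ≤ a,
      ((k : ℝ) - r) * ((w : ℝ) - r) * (t (min (r + 1) a) - t r)
        + ((q : ℝ) + r) * r * (t (r - 1) - t r) = - ω * t r := by
  set S : ℕ → ℝ := fun r => (k.choose r : ℝ) * ((w + q).choose (q + r) : ℝ) with hS
  have hSpos : ∀ r ≤ a, 0 < S r := by
    intro r hr
    simp only [hS]
    have h1 : 0 < k.choose r := Nat.choose_pos (by omega)
    have h2 : 0 < (w + q).choose (q + r) := Nat.choose_pos (by omega)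
    positivity
  have hSrel : ∀ r ≤ a, S r * (((k : ℝ) - r) * ((w : ℝ) - r)) =
      S (r + 1) * (((q : ℝ) + r + 1) * (r + 1)) := by
    intro r hr
    have h1 := Nat.choose_succ_right_eq k r
    have h2 := Nat.choose_succ_right_eq (w + q) (q + r)
    have h1' : (k.choose (r + 1) : ℝ) * (r + 1) = k.choose r * ((k : ℝ) - r) := by
      rw [← Nat.cast_sub (by omega)]; exact_mod_cast h1
    have h2' : ((w + q).choose (q + r + 1) : ℝ) * (q + r + 1) =
        (w + q).choose (q + r) * ((w : ℝ) - r) := by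
      rw [← Nat.cast_sub (by omega : r ≤ w)]
      rw [show w + q - (q + r) = w - r by omega] at h2
      exact_mod_cast h2
    simp only [hS, ← add_assoc]
    calc _ = ((k.choose r : ℝ) * ((k : ℝ) - r)) * ((w + q).choose (q + r) * ((w : ℝ) - r)) := by ring
      _ = _ := by rw [← h1', ← h2']; ring
  set T : ℕ → ℝ := ptl k w q ω with hT
  set t : ℕ → ℝ := fun r => (T (r + 1) - T r) / S r with ht
  have hSt : ∀ r ≤ a, S r * t r = T (r + 1) - T r := by
    intro r hr
    have := (hSpos r hr).ne'
    simp only [ht]; field_simp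
  have up : ∀ r < a, S r * (((k : ℝ) - r) * ((w : ℝ) - r)) * (t (r + 1) - t r) = - ω * T (r + 1) := by
    intro r hr
    have e1 := hSrel r hr.le
    have e2 := hSt (r + 1) hr
    have e3 := hSt r hr.le
    have e4 := ptl_step k w q ω (by positivity) r
    simp only [← hT] at e4
    rw [show r + 1 + 1 = r + 2 from rfl] at e2
    linear_combination t (r + 1) * e1 + (((q : ℝ) + r + 1) * (r + 1)) * e2
      - (((k : ℝ) - r) * ((w : ℝ) - r)) * e3 + e4
  refine ⟨t, ?_, ?_⟩
  · have h0 := hSt 0 (Nat.zero_le _)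
    have : T (0 + 1) - T 0 = 1 := by simp [hT, ptl]
    intro hz
    rw [this, hz] at h0; simp at h0
  intro r hr
  have A1 : S r * (((k : ℝ) - r) * ((w : ℝ) - r)) * (t (min (r + 1) a) - t r) = - ω * T (r + 1) := by
    rcases hr.lt_or_eq with h | h
    · rw [min_eq_left h]; exact up r h
    · subst h; rw [min_eq_right (by omega)]
      have : T (r + 1) = 0 := hroot
      rw [this]; ring
  have A2 : S r * (((q : ℝ) + r) * r) * (t (r - 1) - t r) = ω * T r := by
    rcases r with _ | r
    · simp [hT, ptl]
    · have e1 := hSrel r (by omega)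
      have e2 := up r (by omega)
      rw [Nat.add_sub_cancel]
      push_cast
      linear_combination - e2 + (t (r + 1) - t r) * e1
  have A3 := hSt r hr
  apply mul_left_cancel₀ (hSpos r hr).ne'
  linear_combination A1 + A2 + ω * A3

lemma no_radial {𝓑 : Finset (Finset α)} {d e q a : ℕ}
    (hv : Fintype.card α = d + e + 2 * q + 4 * a + 2)
    (hk : ∀ B ∈ 𝓑, B.card = d + q + 2 * a + 1)
    (hd : ∀ B ∈ 𝓑, ∀ C ∈ 𝓑, B ≠ C → (B ∩ C).card ≤ d)
    (hcov : ∀ X : Finset α, X.card = d + 2 * q + 2 * a + 1 →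
      ∃ B ∈ 𝓑, d + q + a + 1 ≤ (X ∩ B).card)
    (B0 : Finset α) (hB0 : B0 ∈ 𝓑) (hed : e ≤ d) (ω : ℝ)
    (hroot : ptl (d + q + 2 * a + 1) (e + 2 * a + 1) q ω (a + 1) = 0)
    (hω1 : ((e : ℝ) + 2 * a - 1) * (d + 2 * q + 2 * a + 4) < ω)
    (hω2 : ω < ((e : ℝ) + 2 * a) * (d + 2 * q + 2 * a + 3)) : False := by
  obtain ⟨t, ht0, ht⟩ := radial (d + q + 2 * a + 1) (e + 2 * a + 1) q a ω (by omega) (by omega)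
    (by push_cast; exact hroot)
  choose! F hF1 hF2 using hcov
  set w := d + 2 * q + 2 * a + 1 with hw
  set f : Finset α → ℝ := fun X => if X.card = w then t ((F X \ X).card) else 0 with hf
  have huniq : ∀ X : Finset α, X.card = w → ∀ B ∈ 𝓑, d + q + a + 1 ≤ (X ∩ B).card → F X = B := by
    intro X hX B hB h
    have h2 := hF2 X hX
    exact uniq_block (X := X) hd (hF1 X hX) hB (by omega)
  have hsd : ∀ X : Finset α, ∀ B ∈ 𝓑, (B \ X).card + (X ∩ B).card = d + q + 2 * a + 1 := by
    intro X B hB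
    rw [inter_comm, card_sdiff_add_card_inter, hk B hB]
  have hval : ∀ X : Finset α, X.card = w → ∀ s ∈ Xᶜ, ∀ x ∈ X,
      f ((insert s X).erase x) = t ((F X \ X).card)
        + (if s ∉ F X then 1 else 0) * ((if x ∈ F X then 1 else 0) *
            (t (min ((F X \ X).card + 1) a) - t ((F X \ X).card)))
        + (if s ∈ F X then 1 else 0) * ((if x ∉ F X then 1 else 0) *
            (t ((F X \ X).card - 1) - t ((F X \ X).card))) := by
    intro X hX s hs x hx
    rw [mem_compl] at hs
    have hsx : s ≠ x := by rintro rfl; exact hs hx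
    have hX' : ((insert s X).erase x).card = w := by
      rw [card_erase_of_mem (by simp [hx]), card_insert_of_notMem hs]; omega
    set X' := (insert s X).erase x with hXd
    have hfX : f X' = t ((F X' \ X').card) := by simp only [hf, hX', if_true]
    have hB := hF1 X hX
    have hB2 := hF2 X hX
    set B := F X with hBdef
    have hr := hsd X B hB
    have hr' := hsd X' B hB
    by_cases hsB : s ∈ B <;> by_cases hxB : x ∈ B
    · have e1 : B \ X' = insert x ((B \ X).erase s) := by
        ext y; simp only [hXd, mem_sdiff, mem_insert, mem_erase]; grind
      have e2 : (B \ X').card = (B \ X).card := by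
        rw [e1, card_insert_of_notMem (by simp [hx]), card_erase_add_one (by simp [hs, hsB])]
      have e3 : F X' = B := huniq X' hX' B hB (by omega)
      rw [hfX, e3, e2]; simp [hsB, hxB]
    · have e1 : B \ X' = (B \ X).erase s := by
        ext y; simp only [hXd, mem_sdiff, mem_insert, mem_erase]; grind
      have e2 : (B \ X').card = (B \ X).card - 1 := by
        rw [e1, card_erase_of_mem (by simp [hs, hsB])]
      have e3 : F X' = B := huniq X' hX' B hB (by omega)
      rw [hfX, e3, e2]; simp [hsB, hxB]
    · have e1 : B \ X' = insert x (B \ X) := by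
        ext y; simp only [hXd, mem_sdiff, mem_insert, mem_erase]; grind
      have e2 : (B \ X').card = (B \ X).card + 1 := by
        rw [e1, card_insert_of_notMem (by simp [hx])]
      have goal : (F X' \ X').card = min ((B \ X).card + 1) a := by
        by_cases hra : (B \ X).card + 1 ≤ a
        · have e3 : F X' = B := huniq X' hX' B hB (by omega)
          rw [e3, e2, min_eq_left hra]
        · rw [min_eq_right (by omega)]
          have c1 := hF1 X' hX'
          have c2 := hF2 X' hX'
          have c3 := hsd X' (F X') c1
          by_contra hne
          have c4 : X' ∩ F X' ⊆ insert s (X ∩ F X') := by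
            intro y; simp only [hXd, mem_inter, mem_insert, mem_erase]; tauto
          have c5 := card_le_card c4
          have c6 := card_insert_le s (X ∩ F X')
          have c7 : B = F X' := huniq X hX (F X') c1 (by omega)
          rw [← c7] at c2
          omega
      rw [hfX, goal]; simp [hsB, hxB]
    · have e1 : B \ X' = B \ X := by
        ext y; simp only [hXd, mem_sdiff, mem_insert, mem_erase]; grind
      have e3 : F X' = B := huniq X' hX' B hB (by rw [e1] at hr'; omega)
      rw [hfX, e3, e1]; simp [hsB, hxB]
  have hfs : ∀ X : Finset α, X.card ≠ w → f X = 0 := by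
    intro X hX; simp only [hf, if_neg hX]
  have heig : ∀ X : Finset α, X.card = w →
      dnOp (upOp f) X = (((e : ℝ) + 2 * a + 1) * (w + 1) - ω) * f X := by
    intro X hX
    rw [dn_up_apply, sum_congr rfl (fun s hs => sum_congr rfl (fun x hx => hval X hX s hs x hx))]
    have hB := hF1 X hX
    have hB2 := hF2 X hX
    have hfX : f X = t ((F X \ X).card) := by simp only [hf, hX, if_true]
    rw [hfX]
    set B := F X with hBdef
    have hr := hsd X B hB
    set r := (B \ X).card with hrdef
    have hXc : Xᶜ.card = e + 2 * a + 1 := by rw [card_compl, hv, hX]; omega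
    have k1 : ((X.filter (fun x => x ∈ B)).card : ℝ) = (d + q + 2 * a + 1 : ℕ) - (r : ℝ) := by
      rw [filter_mem_eq_inter, ← hr]; push_cast; ring
    have k2 : ((X.filter (fun x => x ∉ B)).card : ℝ) = (q : ℝ) + r := by
      have := card_filter_add_card_filter_not (s := X) (fun x => x ∈ B)
      rw [hX] at this
      have h3 : ((X.filter (fun x => x ∈ B)).card : ℝ) + (X.filter (fun x => x ∉ B)).card = w := by
        exact_mod_cast this
      rw [k1, hw] at h3
      push_cast at h3
      linarith
    have k3n : (Xᶜ.filter (fun x => x ∈ B)).card = r := by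
      rw [hrdef]; congr 1; ext y; simp only [mem_filter, mem_compl, mem_sdiff]; tauto
    have k3 : ((Xᶜ.filter (fun x => x ∈ B)).card : ℝ) = r := by exact_mod_cast k3n
    have k4 : ((Xᶜ.filter (fun x => x ∉ B)).card : ℝ) = (e + 2 * a + 1 : ℕ) - (r : ℝ) := by
      have := card_filter_add_card_filter_not (s := Xᶜ) (fun x => x ∈ B)
      rw [hXc, k3n] at this
      rw [← this]; push_cast; ring
    have hrec := ht r (by omega)
    simp only [sum_add_distrib, ← mul_sum, ← sum_mul, sum_boole, sum_const, nsmul_eq_mul]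
    rw [k1, k2, k3, k4, hXc, hX]
    push_cast at hrec ⊢
    linear_combination hrec
  have hzero := no_eig hfs heig (by rw [hv, hw]; push_cast; have : (e : ℝ) ≤ d := by exact_mod_cast hed
                                    linarith [(Nat.cast_nonneg q : (0 : ℝ) ≤ q)])
    (by rw [hv, hw]; push_cast; linarith) (by rw [hv, hw]; push_cast; linarith)
  obtain ⟨X0, hX0, hX0c⟩ := exists_superset_card_eq (s := B0) (n := w)
    (by rw [hk B0 hB0]; omega) (by rw [hv]; omega)
  have hFX : F X0 = B0 := huniq X0 hX0c B0 hB0 (by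
    rw [inter_eq_right.2 hX0, hk B0 hB0]; omega)
  have := hzero X0
  simp only [hf, hX0c, if_true, hFX, sdiff_eq_empty_iff_subset.2 hX0, card_empty] at this
  exact ht0 this

lemma final_real (i e : ℝ) (hi : 18 ≤ i) (he : i + 2 ≤ e)
    (hQ : 0 < (i + 1) * e ^ 2 - (i - 1) * (3 * i - 1) * e + 2 * i * (i - 1) ^ 2) :
    (i - 1) * (3 * i - 1 + Real.sqrt (i ^ 2 - 14 * i + 1)) / (2 * (i + 1)) < e ∧ 2 * i - 9 < e := by
  have hs0 : 0 ≤ i ^ 2 - 14 * i + 1 := by nlinarith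
  set s := Real.sqrt (i ^ 2 - 14 * i + 1) with hs
  have hsq : s ^ 2 = i ^ 2 - 14 * i + 1 := Real.sq_sqrt hs0
  have hsn : 0 ≤ s := Real.sqrt_nonneg _
  -- value at i+2 is nonpositive
  have q1 : (i + 1) * (i + 2) ^ 2 - (i - 1) * (3 * i - 1) * (i + 2) + 2 * i * (i - 1) ^ 2 ≤ 0 := by
    nlinarith [mul_nonneg (by linarith : 0 ≤ i - 18) (by linarith : 0 ≤ i)]
  have q2 : (i + 1) * (2 * i - 9) ^ 2 - (i - 1) * (3 * i - 1) * (2 * i - 9)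
      + 2 * i * (i - 1) ^ 2 ≤ 0 := by
    nlinarith [mul_nonneg (by linarith : 0 ≤ i - 18) (by linarith : 0 ≤ i)]
  constructor
  · rw [div_lt_iff₀ (by linarith)]
    by_contra hc
    have hc := not_lt.1 hc
    -- y = 2(i+1)e - (i-1)(3i-1), y² > ((i-1)s)², y ≤ (i-1)s
    have hy : ((i - 1) * s) ^ 2 < (2 * (i + 1) * e - (i - 1) * (3 * i - 1)) ^ 2 := by
      rw [mul_pow, hsq]
      nlinarith
    have hy2 : 2 * (i + 1) * (i + 2) - (i - 1) * (3 * i - 1) ≤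
        2 * (i + 1) * e - (i - 1) * (3 * i - 1) := by nlinarith
    have hy3 : (2 * (i + 1) * (i + 2) - (i - 1) * (3 * i - 1)) ^ 2 ≤ ((i - 1) * s) ^ 2 := by
      rw [mul_pow, hsq]
      nlinarith
    have hm : 0 ≤ (i - 1) * s := mul_nonneg (by linarith) hsn
    have l1 := abs_le_of_sq_le_sq' hy3 hm
    have : (2 * (i + 1) * e - (i - 1) * (3 * i - 1)) ^ 2 ≤ ((i - 1) * s) ^ 2 := by
      apply sq_le_sq'
      · linarith [l1.1]
      · linarith
    linarith
  · by_contra hc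
    have hc := not_lt.1 hc
    -- convexity
    have p : (e - (i + 2)) * ((2 * i - 9) - e) ≥ 0 := mul_nonneg (by linarith) (by linarith)
    by_cases hz : 2 * i - 9 = i + 2
    · have : e = i + 2 := by linarith
      rw [this] at hQ; linarith
    · have hlt : 0 < (2 * i - 9) - (i + 2) := by
        rcases lt_or_eq_of_le (by linarith : (i + 2) ≤ 2 * i - 9) with h | h
        · linarith
        · exact absurd h.symm hz
      have id : ((i + 1) * e ^ 2 - (i - 1) * (3 * i - 1) * e + 2 * i * (i - 1) ^ 2) *
          ((2 * i - 9) - (i + 2)) =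
          ((i + 1) * (i + 2) ^ 2 - (i - 1) * (3 * i - 1) * (i + 2) + 2 * i * (i - 1) ^ 2)
            * ((2 * i - 9) - e)
          + ((i + 1) * (2 * i - 9) ^ 2 - (i - 1) * (3 * i - 1) * (2 * i - 9)
            + 2 * i * (i - 1) ^ 2) * (e - (i + 2))
          - (i + 1) * ((e - (i + 2)) * ((2 * i - 9) - e)) * ((2 * i - 9) - (i + 2)) := by ring
      have := mul_pos hQ hlt
      have t1 := mul_nonneg (by linarith : (0:ℝ) ≤ i + 1) p
      have t2 := mul_nonneg t1 hlt.le
      have t3 := mul_nonneg (neg_nonneg.2 q1) (by linarith : 0 ≤ (2 * i - 9) - e)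
      have t4 := mul_nonneg (neg_nonneg.2 q2) (by linarith : 0 ≤ e - (i + 2))
      linarith

/-- **Theorem 5 (1).** Let `𝓑` be a `β(i)` design with parameter `(v, k, d)`, `v ≤ 2k`
and `k - d ≥ i + 2`.  If `𝓑` is not a `β(i+1)` design and `i ≥ 18`, then
`(i-1)(3i - 1 + √(i² - 14i + 1))/(2(i+1)) < k - d ≤ 2i`; in particular
`2i - 8 ≤ k - d ≤ 2i`. -/
theorem beta_design_kd_lower (𝓑 : Finset (Finset α)) (v k d i : ℕ)
    (hB : IsBetaDesign 𝓑 v k d i) (hv : v ≤ 2 * k) (hkd : i + 2 ≤ k - d)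
    (hnot : ¬ IsBetaDesign 𝓑 v k d (i + 1)) (hi : 18 ≤ i) :
    (((i : ℝ) - 1) * (3 * (i : ℝ) - 1 + Real.sqrt ((i : ℝ) ^ 2 - 14 * (i : ℝ) + 1))
        / (2 * ((i : ℝ) + 1)) < (k : ℝ) - (d : ℝ)) ∧
    k - d ≤ 2 * i ∧ 2 * i - 8 ≤ k - d := by
  obtain ⟨hdes, hi1, hiv, hcov⟩ := hB
  have hdes' := hdes
  obtain ⟨hcard, -, hdk, hkv, hk, hd, B, hBm, C, hCm, hBC, hBCd⟩ := hdes
  have hcov' : ∀ X : Finset α, X.card = d + 2 * i - 1 → ∃ B ∈ 𝓑, d + i ≤ (X ∩ B).card := by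
    intro X hX
    obtain ⟨B, ⟨h1, h2⟩, -⟩ := hcov X hX
    exact ⟨B, h1, h2⟩
  have hvd : 2 * k ≤ v + d := by
    have h1 := card_union_add_card_inter B C
    have h2 := card_le_univ (B ∪ C)
    rw [hk B hBm, hk C hCm, hBCd] at h1
    rw [hcard] at h2
    omega
  obtain ⟨Y, hY, hno⟩ : ∃ Y : Finset α, Y.card = d + 2 * i + 1 ∧
      ∀ B ∈ 𝓑, (Y ∩ B).card < d + i + 1 := by
    by_contra hcon
    push Not at hcon
    apply hnot
    refine ⟨hdes', by omega, by omega, ?_⟩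
    intro X hX
    obtain ⟨B, hB, hb⟩ := hcon X (by omega)
    refine ⟨B, ⟨hB, by omega⟩, ?_⟩
    rintro C ⟨hC, hc⟩
    exact uniq_block (X := X) hd hC hB (by omega)
  have H1 := step_one hcard hk hd hi1 (by omega) hcov' Y hY hno
  have H2 := step_two hcard hk hd hi1 (by omega) (by omega) hcov' B hBm
  obtain ⟨a, ha⟩ : ∃ a, k = d + i + a := ⟨k - d - i, by omega⟩
  obtain ⟨e, he⟩ : ∃ e, v + d = 2 * k + e := ⟨v + d - 2 * k, by omega⟩
  have ha2 : 2 ≤ a := by omega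
  have hed : e ≤ d := by omega
  have H1' : a * d + i ≤ i * e := by
    rw [show k - d - i = a by omega, show v - (d + 2 * i + 1) = 2 * a + e - 1 by omega] at H1
    obtain ⟨c, hc⟩ : ∃ c, 2 * a + e = c + 1 := ⟨2 * a + e - 1, by omega⟩
    rw [hc, Nat.add_sub_cancel] at H1
    nlinarith
  have H2' : (i - 1) * e ≤ (a + 1) * d := by
    rw [show v + 1 - (k + i) = a + e + 1 by omega, show k - d - i + 1 = a + 1 by omega,
      show d + i - 1 = d + (i - 1) by omega] at H2
    nlinarith
  have hai : a < i := by
    by_contra hc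
    have hc := not_lt.1 hc
    have h1 : i * e ≤ a * d := Nat.mul_le_mul hc hed
    omega
  obtain ⟨q, hq⟩ : ∃ q, i = q + a + 1 := ⟨i - a - 1, by omega⟩
  have haR : (2 : ℝ) ≤ a := by exact_mod_cast ha2
  have hiR : (i : ℝ) = q + a + 1 := by rw [hq]; push_cast; ring
  have hkR : (k : ℝ) - d = q + 2 * a + 1 := by rw [ha, hq]; push_cast; ring
  have hQ : 0 < ((i : ℝ) + 1) * ((k : ℝ) - d) ^ 2 - ((i : ℝ) - 1) * (3 * i - 1) * ((k : ℝ) - d)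
      + 2 * i * ((i : ℝ) - 1) ^ 2 := by
    by_contra hc
    have hc := not_lt.1 hc
    have hK : 0 ≤ ((a : ℝ) - 1) * q ^ 2 + ((a : ℝ) ^ 2 - 6 * a - 3) * q
        - (7 * (a : ℝ) ^ 2 + 7 * a + 2) := by
      rw [hiR, hkR] at hc
      nlinarith
    have hq2 : 2 ≤ q := by
      by_contra hlt
      have : q = 0 ∨ q = 1 := by omega
      rcases this with rfl | rfl
      · push_cast at hK; nlinarith
      · push_cast at hK; nlinarith
    obtain ⟨ω, hz, hw1, hw2⟩ := exists_root d e q a hq2 ha2 (by rw [← hq]; exact H1')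
      (by rw [show q + a = i - 1 by omega]; exact H2') hK
    refine no_radial (𝓑 := 𝓑) (d := d) (e := e) (q := q) (a := a) (by omega) ?_ hd ?_ B hBm hed ω
      hz hw1 hw2
    · intro B hB; rw [hk B hB]; omega
    · intro X hX
      obtain ⟨B, h1, h2⟩ := hcov' X (by omega)
      exact ⟨B, h1, by omega⟩
  have hiR18 : (18 : ℝ) ≤ i := by exact_mod_cast hi
  obtain ⟨F1, F2⟩ := final_real i ((k : ℝ) - d) hiR18 (by rw [hkR, hiR]; linarith) hQ
  refine ⟨F1, by omega, ?_⟩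
  have F3 : 2 * (i : ℝ) + d < k + 9 := by linarith
  have F4 : 2 * i + d < k + 9 := by exact_mod_cast F3
  omega
end

section
/- Let 𝓓 = (Ω, 𝓑) be a β(i) design with parameter (v, k, d), where v ≤ 2k and k−d ≥ i+3. If 𝓓 is not a β(i+1) design and i ≥ 15, then (i−1)(3i−1+√(i²−14i+1))/(2(i+1)) < k−d ≤ 2i; in particular, if i ≥ 16 then 2i−8 ≤ k−d ≤ 2i. -/
open Finset

variable {α : Type*} [Fintype α] [DecidableEq α]

/-- Lower bound from a bad set. -/
lemma bd_lower (𝓑 : Finset (Finset α)) (d i y M : ℕ)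
    (hk : ∀ B ∈ 𝓑, B.card = d + i + y)
    (hd : ∀ B ∈ 𝓑, ∀ C ∈ 𝓑, B ≠ C → (B ∩ C).card ≤ d)
    (hex : ∀ X : Finset α, X.card = d + 2 * i - 1 → ∃ B ∈ 𝓑, d + i ≤ (X ∩ B).card)
    (hi : 1 ≤ i)
    (X : Finset α) (hX : X.card = d + 2 * i + 1) (hM : Xᶜ.card = M)
    (hbad : ∀ C ∈ 𝓑, (X ∩ C).card ≤ d + i) :
    (d + 2 * i) * y ≤ i * M := by
  have hne : X.Nonempty := by
    rw [← Finset.card_pos]; omega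
  obtain ⟨a, ha⟩ := hne
  set L := 𝓑.filter (fun C => (X ∩ C).card = d + i ∧ a ∉ C) with hL
  have hsd : ∀ C ∈ L, (X \ C).card = i + 1 := by
    intro C hC
    simp only [hL, mem_filter] at hC
    have := Finset.card_sdiff_add_card_inter X C
    omega
  have h1 : d + 2 * i ≤ L.card * i := by
    have hsub : X.erase a ⊆ L.biUnion (fun C => (X \ C).erase a) := by
      intro b hb
      have hab : b ≠ a := Finset.ne_of_mem_erase hb
      have hbX : b ∈ X := Finset.mem_of_mem_erase hb
      obtain ⟨C, hC, hc⟩ := hex ((X.erase a).erase b) (by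
        rw [Finset.card_erase_of_mem hb, Finset.card_erase_of_mem ha]; omega)
      have hle := hbad C hC
      have hsub2 : ((X.erase a).erase b) ∩ C ⊆ X ∩ C := by
        intro z hz; simp at hz ⊢; tauto
      have heq : ((X.erase a).erase b) ∩ C = X ∩ C :=
        Finset.eq_of_subset_of_card_le hsub2 (by omega)
      have haC : a ∉ C := by
        intro h
        have : a ∈ ((X.erase a).erase b) ∩ C := by rw [heq]; simp [ha, h]
        simp at this
      have hbC : b ∉ C := by
        intro h
        have : b ∈ ((X.erase a).erase b) ∩ C := by rw [heq]; simp [hbX, h]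
        simp at this
      rw [heq] at hc
      simp only [mem_biUnion, hL, mem_filter]
      refine ⟨C, ⟨hC, by omega, haC⟩, ?_⟩
      simp [hab, hbX, hbC]
    have h2 := Finset.card_le_card hsub
    rw [Finset.card_erase_of_mem ha] at h2
    have h3 : (L.biUnion (fun C => (X \ C).erase a)).card ≤ L.card * i := by
      apply Finset.card_biUnion_le_card_mul
      intro C hC
      have haC : a ∉ C := by simp only [hL, mem_filter] at hC; exact hC.2.2
      rw [Finset.card_erase_of_mem (by simp [ha, haC]), hsd C hC]; omega
    omega
  have h4 : L.card * y ≤ M := by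
    have hdis : ∀ C ∈ L, ∀ C' ∈ L, C ≠ C' → Disjoint (C \ X) (C' \ X) := by
      intro C hC C' hC' hne
      have hC1 := hC
      have hC1' := hC'
      simp only [hL, mem_filter] at hC1 hC1'
      have hle := hd C hC1.1 C' hC1'.1 hne
      rw [Finset.disjoint_left]
      intro z hz hz'
      simp only [mem_sdiff] at hz hz'
      have hu : ((X \ C) ∪ (X \ C')).card + ((X \ C) ∩ (X \ C')).card = (i + 1) + (i + 1) := by
        rw [Finset.card_union_add_card_inter, hsd C hC, hsd C' hC']
      have hp : 0 < ((X \ C) ∩ (X \ C')).card := by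
        rw [Finset.card_pos]; exact ⟨a, by simp [ha, hC1.2.2, hC1'.2.2]⟩
      have hcov : X ⊆ ((X \ C) ∪ (X \ C')) ∪ ((C ∩ C').erase z) := by
        intro b hb
        have : b ≠ z := by rintro rfl; exact hz.2 hb
        simp [hb, this]; tauto
      have h5 := Finset.card_le_card hcov
      have h6 := Finset.card_union_le ((X \ C) ∪ (X \ C')) ((C ∩ C').erase z)
      rw [Finset.card_erase_of_mem (by simp [hz.1, hz'.1])] at h6
      have : 0 < (C ∩ C').card := by
        rw [Finset.card_pos]; exact ⟨z, by simp [hz.1, hz'.1]⟩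
      omega
    have h7 : (L.biUnion (fun C => C \ X)).card = ∑ C ∈ L, (C \ X).card :=
      Finset.card_biUnion hdis
    have h8 : ∑ C ∈ L, (C \ X).card = ∑ C ∈ L, y := by
      apply Finset.sum_congr rfl
      intro C hC
      simp only [hL, mem_filter] at hC
      have := Finset.card_sdiff_add_card_inter C X
      rw [Finset.inter_comm, hk C hC.1] at this
      omega
    rw [Finset.sum_const, smul_eq_mul] at h8
    rw [← h8, ← h7, ← hM]
    apply Finset.card_le_card
    intro z hz
    simp only [mem_biUnion, mem_sdiff] at hz
    obtain ⟨C, _, _, hz⟩ := hz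
    simpa using hz
  calc (d + 2 * i) * y ≤ (L.card * i) * y := Nat.mul_le_mul_right _ h1
    _ = i * (L.card * y) := by ring
    _ ≤ i * M := Nat.mul_le_mul_left _ h4

/-- Upper (Roos type) bound. -/
lemma bd_upper (𝓑 : Finset (Finset α)) (d e y s : ℕ)
    (hk : ∀ B ∈ 𝓑, B.card = d + (e + 1) + y)
    (hd : ∀ B ∈ 𝓑, ∀ C ∈ 𝓑, B ≠ C → (B ∩ C).card ≤ d)
    (hex : ∀ X : Finset α, X.card = d + 2 * (e + 1) - 1 →
      ∃ B ∈ 𝓑, d + (e + 1) ≤ (X ∩ B).card)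
    (he : 1 ≤ e)
    (B : Finset α) (hB : B ∈ 𝓑) (hw : Bᶜ.card = e + s) :
    s * e ≤ (y + 1) * (d + e) := by
  obtain ⟨A, hAB, hA⟩ := Finset.exists_subset_card_eq (s := B) (n := d + e)
    (by rw [hk B hB]; omega)
  obtain ⟨F, hFB, hF⟩ := Finset.exists_subset_card_eq (s := Bᶜ) (n := e)
    (by rw [hw]; omega)
  have hFB' : ∀ z ∈ F, z ∉ B := fun z hz => by simpa using hFB hz
  set L := 𝓑.filter (fun C => F ⊆ C ∧ (A ∩ C).card = d ∧ C ≠ B) with hL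
  have h1 : s ≤ L.card * (y + 1) := by
    have hsub : Bᶜ \ F ⊆ L.biUnion (fun C => (C \ B) \ F) := by
      intro b hb
      simp only [mem_sdiff, mem_compl] at hb
      have hbA : b ∉ A := fun h => hb.1 (hAB h)
      have hdAF : Disjoint A F := by
        rw [Finset.disjoint_left]; intro z hz hz'; exact hFB' z hz' (hAB hz)
      have hcard : (insert b (A ∪ F)).card = d + 2 * (e + 1) - 1 := by
        rw [Finset.card_insert_of_notMem (by simp [hbA, hb.2]),
          Finset.card_union_of_disjoint hdAF, hA, hF]; omega
      obtain ⟨C, hC, hc⟩ := hex _ hcard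
      have hCB : C ≠ B := by
        rintro rfl
        have : (insert b (A ∪ F)) ∩ C ⊆ A := by
          intro z hz
          simp only [mem_inter, mem_insert, mem_union] at hz
          rcases hz with ⟨rfl | h | h, h2⟩
          · exact absurd h2 hb.1
          · exact h
          · exact absurd h2 (hFB' z h)
        have := Finset.card_le_card this
        omega
      have hle := hd C hC B hB hCB
      have hAC : (A ∩ C).card ≤ (C ∩ B).card := by
        apply Finset.card_le_card
        intro z hz; simp only [mem_inter] at hz ⊢; exact ⟨hz.2, hAB hz.1⟩
      have hsp : (insert b (A ∪ F)) ∩ C ⊆ (A ∩ C) ∪ ((insert b F) ∩ C) := by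
        intro z hz; simp at hz ⊢; tauto
      have h2 := (Finset.card_le_card hsp).trans (Finset.card_union_le _ _)
      have hbF : (insert b F).card = e + 1 := by
        rw [Finset.card_insert_of_notMem hb.2, hF]
      have h3 : (insert b F) ∩ C ⊆ insert b F := Finset.inter_subset_left
      have h3' := Finset.card_le_card h3
      have h4 : (insert b F) ∩ C = insert b F := Finset.eq_of_subset_of_card_le h3 (by omega)
      have h5 : insert b F ⊆ C := by rw [← h4]; exact Finset.inter_subset_right
      simp only [mem_biUnion, hL, mem_filter]
      refine ⟨C, ⟨hC, fun z hz => h5 (by simp [hz]), by omega, hCB⟩, ?_⟩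
      have : b ∈ C := h5 (by simp)
      simp [this, hb.1, hb.2]
    have h2 := Finset.card_le_card hsub
    rw [Finset.card_sdiff_of_subset hFB, hw, hF] at h2
    have h3 : (L.biUnion (fun C => (C \ B) \ F)).card ≤ L.card * (y + 1) := by
      apply Finset.card_biUnion_le_card_mul
      intro C hC
      simp only [hL, mem_filter] at hC
      have hFC : F ⊆ C \ B := by
        intro z hz; simp only [mem_sdiff]; exact ⟨hC.2.1 hz, hFB' z hz⟩
      rw [Finset.card_sdiff_of_subset hFC, hF]
      have h4 := Finset.card_sdiff_add_card_inter C B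
      rw [hk C hC.1] at h4
      have : (A ∩ C).card ≤ (C ∩ B).card := by
        apply Finset.card_le_card
        intro z hz; simp only [mem_inter] at hz ⊢; exact ⟨hz.2, hAB hz.1⟩
      omega
    omega
  have h4 : L.card * e ≤ d + e := by
    have hdis : ∀ C ∈ L, ∀ C' ∈ L, C ≠ C' → Disjoint (A \ C) (A \ C') := by
      intro C hC C' hC' hne
      simp only [hL, mem_filter] at hC hC'
      have hle := hd C hC.1 C' hC'.1 hne
      rw [Finset.disjoint_left]
      intro z hz hz'
      have c1 := Finset.card_sdiff_add_card_inter A C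
      have c2 := Finset.card_sdiff_add_card_inter A C'
      have hu := Finset.card_union_add_card_inter (A \ C) (A \ C')
      have hp : 0 < ((A \ C) ∩ (A \ C')).card := by
        rw [Finset.card_pos]; exact ⟨z, by simp only [mem_inter]; exact ⟨hz, hz'⟩⟩
      have hcov : A ∪ F ⊆ ((A \ C) ∪ (A \ C')) ∪ (C ∩ C') := by
        intro b hb
        simp only [mem_union] at hb
        rcases hb with hb | hb
        · simp [hb]; tauto
        · simp [hC.2.1 hb, hC'.2.1 hb]
      have h5 := (Finset.card_le_card hcov).trans (Finset.card_union_le _ _)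
      have hdAF : Disjoint A F := by
        rw [Finset.disjoint_left]; intro z hz hz'; exact hFB' z hz' (hAB hz)
      rw [Finset.card_union_of_disjoint hdAF] at h5
      omega
    have h7 : (L.biUnion (fun C => A \ C)).card = ∑ C ∈ L, (A \ C).card :=
      Finset.card_biUnion hdis
    have h8 : ∑ C ∈ L, (A \ C).card = ∑ C ∈ L, e := by
      apply Finset.sum_congr rfl
      intro C hC
      simp only [hL, mem_filter] at hC
      have := Finset.card_sdiff_add_card_inter A C
      omega
    rw [Finset.sum_const, smul_eq_mul] at h8
    rw [← h8, ← h7, ← hA]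
    apply Finset.card_le_card
    intro z hz
    simp only [mem_biUnion, mem_sdiff] at hz
    obtain ⟨C, _, hz, _⟩ := hz
    exact hz
  calc s * e ≤ (L.card * (y + 1)) * e := Nat.mul_le_mul_right _ h1
    _ = (y + 1) * (L.card * e) := by ring
    _ ≤ _ := Nat.mul_le_mul_left _ h4

/-- Packing count of blocks meeting a `(d+i+1)`-subset of a block in `d` points. -/
lemma bd_pack (𝓑 : Finset (Finset α)) (d i y w : ℕ)
    (hk : ∀ B ∈ 𝓑, B.card = d + i + y)
    (hd : ∀ B ∈ 𝓑, ∀ C ∈ 𝓑, B ≠ C → (B ∩ C).card ≤ d)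
    (C : Finset α) (hC : C ∈ 𝓑) (hw : Cᶜ.card = w)
    (A : Finset α) (hAC : A ⊆ C) (hA : A.card = d + i + 1) :
    (𝓑.filter (fun D => D ≠ C ∧ (A ∩ D).card = d)).card * ((i + y).choose i * (i + 1).choose 2)
      ≤ w.choose i * (d + i + 1).choose 2 := by
  set T := 𝓑.filter (fun D => D ≠ C ∧ (A ∩ D).card = d) with hT
  have hdis : ∀ D ∈ T, ∀ D' ∈ T, D ≠ D' →
      Disjoint ((powersetCard i (D \ C)) ×ˢ (powersetCard 2 (A \ D)))
        ((powersetCard i (D' \ C)) ×ˢ (powersetCard 2 (A \ D'))) := by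
    intro D hD D' hD' hne
    simp only [hT, mem_filter] at hD hD'
    have hle := hd D hD.1 D' hD'.1 hne
    rw [Finset.disjoint_left]
    rintro ⟨I, p⟩ h h'
    simp only [mem_product, mem_powersetCard] at h h'
    have c1 := Finset.card_sdiff_add_card_inter A D
    have c2 := Finset.card_sdiff_add_card_inter A D'
    have hu := Finset.card_union_add_card_inter (A \ D) (A \ D')
    have hp : 2 ≤ ((A \ D) ∩ (A \ D')).card := by
      rw [← h.2.2]
      exact Finset.card_le_card (Finset.subset_inter h.2.1 h'.2.1)
    have hcov : A ∪ I ⊆ ((A \ D) ∪ (A \ D')) ∪ (D ∩ D') := by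
      intro b hb
      simp only [mem_union] at hb
      rcases hb with hb | hb
      · simp [hb]; tauto
      · have e1 := h.1.1 hb
        have e2 := h'.1.1 hb
        simp only [mem_sdiff] at e1 e2
        simp [e1.1, e2.1]
    have h5 := (Finset.card_le_card hcov).trans (Finset.card_union_le _ _)
    have hdAF : Disjoint A I := by
      rw [Finset.disjoint_left]; intro z hz hz'
      have e1 := h.1.1 hz'
      simp only [mem_sdiff] at e1
      exact e1.2 (hAC hz)
    rw [Finset.card_union_of_disjoint hdAF] at h5
    omega
  have h7 := Finset.card_biUnion hdis
  have h8 : ∑ D ∈ T, ((powersetCard i (D \ C)) ×ˢ (powersetCard 2 (A \ D))).card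
      = ∑ D ∈ T, ((i + y).choose i * (i + 1).choose 2) := by
    apply Finset.sum_congr rfl
    intro D hD
    simp only [hT, mem_filter] at hD
    rw [Finset.card_product, Finset.card_powersetCard, Finset.card_powersetCard]
    have c1 := Finset.card_sdiff_add_card_inter A D
    have c2 := Finset.card_sdiff_add_card_inter D C
    rw [hk D hD.1] at c2
    have hle := hd D hD.1 C hC hD.2.1
    have : (A ∩ D).card ≤ (D ∩ C).card := by
      apply Finset.card_le_card
      intro z hz; simp only [mem_inter] at hz ⊢; exact ⟨hz.2, hAC hz.1⟩
    have e1 : (D \ C).card = i + y := by omega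
    have e2 : (A \ D).card = i + 1 := by omega
    rw [e1, e2]
  rw [Finset.sum_const, smul_eq_mul] at h8
  rw [← h8, ← h7]
  have : w.choose i * (d + i + 1).choose 2 =
      ((powersetCard i Cᶜ) ×ˢ (powersetCard 2 A)).card := by
    rw [Finset.card_product, Finset.card_powersetCard, Finset.card_powersetCard, hw, hA]
  rw [this]
  apply Finset.card_le_card
  rintro ⟨I, p⟩ h
  simp only [mem_biUnion, mem_product, mem_powersetCard] at h ⊢
  obtain ⟨D, _, ⟨h1, h2⟩, h3, h4⟩ := h
  refine ⟨⟨?_, h2⟩, ?_, h4⟩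
  · intro z hz
    have := h1 hz
    simp only [mem_sdiff] at this
    simpa using this.2
  · exact h3.trans Finset.sdiff_subset

/-- Sum over `Z` with `|Z ∩ C|` and `|Z \ C|` prescribed. -/
lemma bd_split (C : Finset α) (p q : ℕ) (f : Finset α → ℕ) :
    ∑ Z ∈ (powersetCard (p + q) (univ : Finset α)).filter (fun Z => (Z ∩ C).card = p), f Z
      = ∑ A ∈ powersetCard p C, ∑ D ∈ powersetCard q Cᶜ, f (A ∪ D) := by
  rw [← Finset.sum_product']
  symm
  refine Finset.sum_bij' (fun a _ => a.1 ∪ a.2) (fun Z _ => (Z ∩ C, Z \ C)) ?_ ?_ ?_ ?_ ?_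
  · rintro ⟨A, D⟩ h
    simp only [mem_product, mem_powersetCard] at h
    have hD : ∀ z ∈ D, z ∉ C := fun z hz => by simpa using h.2.1 hz
    have hdis : Disjoint A D := by
      rw [Finset.disjoint_left]; intro z hz hz'; exact hD z hz' (h.1.1 hz)
    have e : (A ∪ D) ∩ C = A := by
      ext z; simp only [mem_inter, mem_union]
      constructor
      · rintro ⟨h1 | h1, h2⟩
        · exact h1
        · exact absurd h2 (hD z h1)
      · intro h1; exact ⟨Or.inl h1, h.1.1 h1⟩
    simp only [mem_filter, mem_powersetCard, subset_univ, true_and, e]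
    rw [Finset.card_union_of_disjoint hdis, h.1.2, h.2.2]; exact ⟨rfl, rfl⟩
  · intro Z hZ
    simp only [mem_filter, mem_powersetCard, subset_univ, true_and] at hZ
    simp only [mem_product, mem_powersetCard]
    have := Finset.card_sdiff_add_card_inter Z C
    refine ⟨⟨Finset.inter_subset_right, hZ.2⟩, ?_, by omega⟩
    intro z hz; simp only [mem_sdiff] at hz; simpa using hz.2
  · rintro ⟨A, D⟩ h
    simp only [mem_product, mem_powersetCard] at h
    have hD : ∀ z ∈ D, z ∉ C := fun z hz => by simpa using h.2.1 hz
    ext z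
    · simp only [mem_inter, mem_union]
      constructor
      · rintro ⟨h1 | h1, h2⟩
        · exact h1
        · exact absurd h2 (hD z h1)
      · intro h1; exact ⟨Or.inl h1, h.1.1 h1⟩
    · simp only [mem_sdiff, mem_union]
      constructor
      · rintro ⟨h1 | h1, h2⟩
        · exact absurd (h.1.1 h1) h2
        · exact h1
      · intro h1; exact ⟨Or.inr h1, hD z h1⟩
  · intro Z _
    simp only
    ext z; simp only [mem_union, mem_inter, mem_sdiff]; tauto
  · intro a _; rfl

/-- Second moment estimate for one block. -/
lemma bd_second (𝓑 : Finset (Finset α)) (d i y g : ℕ)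
    (hk : ∀ B ∈ 𝓑, B.card = d + i + y)
    (hd : ∀ B ∈ 𝓑, ∀ C ∈ 𝓑, B ≠ C → (B ∩ C).card ≤ d)
    (C : Finset α) (hC : C ∈ 𝓑) (hw : Cᶜ.card = i + g) :
    (∑ Z ∈ (powersetCard ((d + i + 1) + (i + 1)) (univ : Finset α)).filter
        (fun Z => (Z ∩ C).card = d + i + 1),
      (𝓑.filter (fun D => (Z ∩ D).card = d + i + 1)).card) * (g * (i * (i + 1)))
    ≤ (∑ _Z ∈ (powersetCard ((d + i + 1) + (i + 1)) (univ : Finset α)).filter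
        (fun Z => (Z ∩ C).card = d + i + 1), 1)
        * (g * (i * (i + 1)) + y * ((d + i + 1) * (d + i))) := by
  rw [bd_split, bd_split, Finset.sum_mul, Finset.sum_mul]
  apply Finset.sum_le_sum
  intro A hA
  rw [mem_powersetCard] at hA
  have hp := bd_pack 𝓑 d i y (i + g) hk hd C hC hw A hA.1 hA.2
  set T := 𝓑.filter (fun D => D ≠ C ∧ (A ∩ D).card = d) with hT
  have hone : ∑ D ∈ powersetCard (i + 1) Cᶜ, 1 = (i + g).choose (i + 1) := by
    rw [Finset.sum_const, Finset.card_powersetCard, hw]; simp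
  -- bound on the inner sum
  have hin : ∑ D ∈ powersetCard (i + 1) Cᶜ,
      (𝓑.filter (fun E => ((A ∪ D) ∩ E).card = d + i + 1)).card
      ≤ (i + g).choose (i + 1) + T.card * (i + y).choose (i + 1) := by
    have h1 : ∀ D ∈ powersetCard (i + 1) Cᶜ,
        (𝓑.filter (fun E => ((A ∪ D) ∩ E).card = d + i + 1)).card
          ≤ 1 + (T.filter (fun E => D ⊆ E)).card := by
      intro D hD
      rw [mem_powersetCard] at hD
      have hsub : 𝓑.filter (fun E => ((A ∪ D) ∩ E).card = d + i + 1)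
          ⊆ {C} ∪ T.filter (fun E => D ⊆ E) := by
        intro E hE
        simp only [mem_filter] at hE
        by_cases hEC : E = C
        · simp [hEC]
        · have hle := hd E hE.1 C hC hEC
          have hAE : (A ∩ E).card ≤ (E ∩ C).card := by
            apply Finset.card_le_card
            intro z hz; simp only [mem_inter] at hz ⊢; exact ⟨hz.2, hA.1 hz.1⟩
          have hsp : (A ∪ D) ∩ E ⊆ (A ∩ E) ∪ (D ∩ E) := by
            intro z hz; simp at hz ⊢; tauto
          have h2 := (Finset.card_le_card hsp).trans (Finset.card_union_le _ _)
          have h3 : D ∩ E ⊆ D := Finset.inter_subset_left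
          have h3' := Finset.card_le_card h3
          have h4 : D ∩ E = D := Finset.eq_of_subset_of_card_le h3 (by omega)
          have h5 : D ⊆ E := by rw [← h4]; exact Finset.inter_subset_right
          simp only [hT, mem_union, mem_singleton, mem_filter]
          right
          exact ⟨⟨hE.1, hEC, by omega⟩, h5⟩
      refine (Finset.card_le_card hsub).trans ((Finset.card_union_le _ _).trans ?_)
      simp
    refine (Finset.sum_le_sum h1).trans ?_
    rw [Finset.sum_add_distrib, hone]
    apply Nat.add_le_add_left
    simp_rw [Finset.card_filter]
    rw [Finset.sum_comm]
    rw [← smul_eq_mul, ← Finset.sum_const]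
    apply Finset.sum_le_sum
    intro E hE
    simp only [hT, mem_filter] at hE
    rw [← Finset.card_filter]
    have hcE : (E \ C).card = i + y := by
      have c2 := Finset.card_sdiff_add_card_inter E C
      rw [hk E hE.1] at c2
      have hle := hd E hE.1 C hC hE.2.1
      have : (A ∩ E).card ≤ (E ∩ C).card := by
        apply Finset.card_le_card
        intro z hz; simp only [mem_inter] at hz ⊢; exact ⟨hz.2, hA.1 hz.1⟩
      omega
    rw [← hcE, ← Finset.card_powersetCard]
    apply Finset.card_le_card
    intro D hD
    simp only [mem_filter, mem_powersetCard] at hD ⊢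
    refine ⟨?_, hD.1.2⟩
    intro z hz
    have := hD.1.1 hz
    simp only [mem_compl] at this
    simp [hD.2 hz, this]
  rw [hone]
  refine (Nat.mul_le_mul_right _ hin).trans ?_
  have c1 : (i + g).choose (i + 1) * (i + 1) = (i + g).choose i * g := by
    rw [Nat.choose_succ_right_eq]; congr 1; omega
  have c2 : (i + y).choose (i + 1) * (i + 1) = (i + y).choose i * y := by
    rw [Nat.choose_succ_right_eq]; congr 1; omega
  have c3 : (i + 1).choose 2 * 2 = (i + 1) * i := by
    have := Nat.choose_two_right (i + 1)
    have h2 : 2 ∣ (i + 1) * (i + 1 - 1) := by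
      rw [Nat.add_sub_cancel, mul_comm]; exact (Nat.even_mul_succ_self i).two_dvd
    rw [this, Nat.div_mul_cancel h2]; rfl
  have c4 : (d + i + 1).choose 2 * 2 = (d + i + 1) * (d + i) := by
    have := Nat.choose_two_right (d + i + 1)
    have h2 : 2 ∣ (d + i + 1) * (d + i + 1 - 1) := by
      rw [Nat.add_sub_cancel, mul_comm]; exact (Nat.even_mul_succ_self (d + i)).two_dvd
    rw [this, Nat.div_mul_cancel h2]; rfl
  have key : T.card * (i + y).choose (i + 1) * (g * (i * (i + 1)))
      ≤ (i + g).choose (i + 1) * (y * ((d + i + 1) * (d + i))) := by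
    apply Nat.le_of_mul_le_mul_right (c := i + 1) _ (Nat.succ_pos i)
    calc T.card * (i + y).choose (i + 1) * (g * (i * (i + 1))) * (i + 1)
        = T.card * ((i + y).choose (i + 1) * (i + 1)) * g * ((i + 1) * i) := by ring
      _ = T.card * ((i + y).choose i * y) * g * ((i + 1).choose 2 * 2) := by rw [c2, c3]
      _ = (T.card * ((i + y).choose i * (i + 1).choose 2)) * (2 * y * g) := by ring
      _ ≤ ((i + g).choose i * (d + i + 1).choose 2) * (2 * y * g) := Nat.mul_le_mul_right _ hp
      _ = ((i + g).choose i * g) * (y * ((d + i + 1).choose 2 * 2)) := by ring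
      _ = (i + g).choose (i + 1) * (y * ((d + i + 1) * (d + i))) * (i + 1) := by
          rw [← c1, c4]; ring
  linarith [key]

/-- Number of lines of a bad set. -/
lemma bd_lines (𝓑 : Finset (Finset α)) (d i : ℕ)
    (hex : ∀ X : Finset α, X.card = d + 2 * i - 1 → ∃ B ∈ 𝓑, d + i ≤ (X ∩ B).card)
    (hi : 1 ≤ i)
    (X : Finset α) (hX : X.card = d + 2 * i + 1)
    (hbad : ∀ C ∈ 𝓑, (X ∩ C).card ≤ d + i) :
    (d + 2 * i + 1) * (d + 2 * i)
      ≤ (𝓑.filter (fun C => (X ∩ C).card = d + i)).card * (i * (i + 1)) := by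
  set L := 𝓑.filter (fun C => (X ∩ C).card = d + i) with hL
  have hsub : X.offDiag ⊆ L.biUnion (fun C => (X \ C).offDiag) := by
    rintro ⟨a, b⟩ hab
    simp only [mem_offDiag] at hab
    obtain ⟨ha, hbX, hne⟩ := hab
    obtain ⟨C, hC, hc⟩ := hex ((X.erase a).erase b) (by
      rw [Finset.card_erase_of_mem (by simp [hbX, hne.symm]), Finset.card_erase_of_mem ha]; omega)
    have hle := hbad C hC
    have hsub2 : ((X.erase a).erase b) ∩ C ⊆ X ∩ C := by
      intro z hz; simp at hz ⊢; tauto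
    have heq : ((X.erase a).erase b) ∩ C = X ∩ C :=
      Finset.eq_of_subset_of_card_le hsub2 (by omega)
    have haC : a ∉ C := by
      intro h
      have : a ∈ ((X.erase a).erase b) ∩ C := by rw [heq]; simp [ha, h]
      simp at this
    have hbC : b ∉ C := by
      intro h
      have : b ∈ ((X.erase a).erase b) ∩ C := by rw [heq]; simp [hbX, h]
      simp at this
    rw [heq] at hc
    simp only [mem_biUnion, hL, mem_filter]
    refine ⟨C, ⟨hC, by omega⟩, ?_⟩
    simp [ha, haC, hne, hbX, hbC]
  have h2 := Finset.card_le_card hsub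
  have h3 : (L.biUnion (fun C => (X \ C).offDiag)).card ≤ L.card * (i * (i + 1)) := by
    apply Finset.card_biUnion_le_card_mul
    intro C hC
    simp only [hL, mem_filter] at hC
    have := Finset.card_sdiff_add_card_inter X C
    have e : (X \ C).card = i + 1 := by omega
    rw [Finset.offDiag_card, e]
    have : (i + 1) * (i + 1) = i * (i + 1) + (i + 1) := by ring
    omega
  rw [Finset.offDiag_card, hX] at h2
  have : (d + 2 * i + 1) * (d + 2 * i + 1) =
    (d + 2 * i + 1) * (d + 2 * i) + (d + 2 * i + 1) := by ring
  omega

/-- The variance inequality. -/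
lemma bd_var (𝓑 : Finset (Finset α)) (d i y g M : ℕ)
    (hk : ∀ B ∈ 𝓑, B.card = d + i + y)
    (hd : ∀ B ∈ 𝓑, ∀ C ∈ 𝓑, B ≠ C → (B ∩ C).card ≤ d)
    (hex : ∀ X : Finset α, X.card = d + 2 * i - 1 → ∃ B ∈ 𝓑, d + i ≤ (X ∩ B).card)
    (hi : 1 ≤ i) (hy : 1 ≤ y)
    (hw : ∀ C ∈ 𝓑, Cᶜ.card = i + g)
    (hM : Fintype.card α = M + (d + 2 * i + 1))
    (X₀ : Finset α) (hX₀ : X₀.card = d + 2 * i + 1)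
    (hbad₀ : ∀ C ∈ 𝓑, (X₀ ∩ C).card ≤ d + i) :
    y * ((d + 2 * i + 1) * (d + 2 * i)) * g
      ≤ M * (g * (i * (i + 1)) + y * ((d + i + 1) * (d + i))) := by
  set PZ := powersetCard ((d + i + 1) + (i + 1)) (univ : Finset α) with hPZ
  set 𝒵 := PZ.filter (fun Z => ∀ C ∈ 𝓑, (Z ∩ C).card ≤ d + i + 1) with h𝒵
  set 𝒳 := (powersetCard (d + 2 * i + 1) (univ : Finset α)).filter
    (fun X => ∀ C ∈ 𝓑, (X ∩ C).card ≤ d + i) with h𝒳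
  set m : Finset α → ℕ := fun Z => (𝓑.filter (fun D => (Z ∩ D).card = d + i + 1)).card with hm
  set P : Finset α → ℕ := fun Z => (𝒳.filter (fun X => X ⊆ Z)).card with hP
  -- flags are automatically mixed
  have hflag : ∀ C ∈ 𝓑, PZ.filter (fun Z => (Z ∩ C).card = d + i + 1)
      = 𝒵.filter (fun Z => (Z ∩ C).card = d + i + 1) := by
    intro C hC
    ext Z
    simp only [h𝒵, mem_filter]
    constructor
    · rintro ⟨h1, h2⟩
      refine ⟨⟨h1, ?_⟩, h2⟩
      intro D hD
      by_cases hDC : D = C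
      · rw [hDC, h2]
      by_contra hcon
      push Not at hcon
      have hle := hd D hD C hC hDC
      rw [hPZ, mem_powersetCard] at h1
      have hu := Finset.card_union_add_card_inter (Z ∩ D) (Z ∩ C)
      have e1 : ((Z ∩ D) ∪ (Z ∩ C)).card ≤ Z.card := by
        apply Finset.card_le_card; intro z hz; simp at hz; tauto
      have e2 : ((Z ∩ D) ∩ (Z ∩ C)).card ≤ (D ∩ C).card := by
        apply Finset.card_le_card; intro z hz; simp at hz ⊢; tauto
      omega
    · rintro ⟨⟨h1, _⟩, h2⟩; exact ⟨h1, h2⟩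
  -- second moment
  have hS2 : (∑ Z ∈ 𝒵, m Z * m Z) * (g * (i * (i + 1)))
      ≤ (∑ Z ∈ 𝒵, m Z) * (g * (i * (i + 1)) + y * ((d + i + 1) * (d + i))) := by
    have e1 : ∀ f : Finset α → ℕ, ∑ Z ∈ 𝒵, m Z * f Z
        = ∑ C ∈ 𝓑, ∑ Z ∈ PZ.filter (fun Z => (Z ∩ C).card = d + i + 1), f Z := by
      intro f
      have : ∑ C ∈ 𝓑, ∑ Z ∈ PZ.filter (fun Z => (Z ∩ C).card = d + i + 1), f Z
          = ∑ C ∈ 𝓑, ∑ Z ∈ 𝒵.filter (fun Z => (Z ∩ C).card = d + i + 1), f Z :=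
        Finset.sum_congr rfl (fun C hC => by rw [hflag C hC])
      rw [this]
      simp_rw [Finset.sum_filter]
      rw [Finset.sum_comm]
      apply Finset.sum_congr rfl
      intro Z _
      rw [← Finset.sum_filter, Finset.sum_const, smul_eq_mul]
    have e2 : ∑ Z ∈ 𝒵, m Z = ∑ Z ∈ 𝒵, m Z * 1 := by simp
    rw [e2, e1, e1, Finset.sum_mul, Finset.sum_mul]
    apply Finset.sum_le_sum
    intro C hC
    exact bd_second 𝓑 d i y g hk hd C hC (hw C hC)
  -- relation between P and m
  have hPm : ∀ Z ∈ 𝒵, P Z + (i + 1) * m Z = d + 2 * i + 2 := by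
    intro Z hZ
    simp only [h𝒵, mem_filter, hPZ, mem_powersetCard] at hZ
    obtain ⟨⟨-, hZc⟩, hZm⟩ := hZ
    set F := 𝓑.filter (fun D => (Z ∩ D).card = d + i + 1) with hF
    have hdis : ∀ C ∈ F, ∀ C' ∈ F, C ≠ C' → Disjoint (Z \ C) (Z \ C') := by
      intro C hC C' hC' hne
      simp only [hF, mem_filter] at hC hC'
      have hle := hd C hC.1 C' hC'.1 hne
      have c1 := Finset.card_sdiff_add_card_inter Z C
      have c2 := Finset.card_sdiff_add_card_inter Z C'
      have hu := Finset.card_union_add_card_inter (Z \ C) (Z \ C')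
      have hcov : Z ⊆ ((Z \ C) ∪ (Z \ C')) ∪ (C ∩ C') := by
        intro b hb; simp [hb]; tauto
      have h5 := (Finset.card_le_card hcov).trans (Finset.card_union_le _ _)
      have h0 : ((Z \ C) ∩ (Z \ C')).card = 0 := by omega
      rw [Finset.disjoint_iff_inter_eq_empty]
      exact Finset.card_eq_zero.mp h0
    have h7 := Finset.card_biUnion hdis
    have h8 : ∑ C ∈ F, (Z \ C).card = ∑ C ∈ F, (i + 1) := by
      apply Finset.sum_congr rfl
      intro C hC
      simp only [hF, mem_filter] at hC
      have := Finset.card_sdiff_add_card_inter Z C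
      omega
    rw [h8, Finset.sum_const, smul_eq_mul] at h7
    have hUsub : F.biUnion (fun C => Z \ C) ⊆ Z := by
      intro z hz; simp only [mem_biUnion, mem_sdiff] at hz
      obtain ⟨_, _, h, _⟩ := hz; exact h
    have himg : 𝒳.filter (fun X => X ⊆ Z)
        = (Z \ F.biUnion (fun C => Z \ C)).image (fun z => Z.erase z) := by
      ext X
      simp only [mem_filter, h𝒳, mem_powersetCard, subset_univ, true_and, mem_image,
        mem_sdiff, mem_biUnion, not_exists, not_and, not_not]
      constructor
      · rintro ⟨⟨hXc, hXb⟩, hXZ⟩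
        have h1 : (Z \ X).card = 1 := by
          rw [Finset.card_sdiff_of_subset hXZ]; omega
        obtain ⟨z, hz⟩ := Finset.card_eq_one.mp h1
        have hzm : z ∈ Z \ X := by rw [hz]; simp
        have hzZ : z ∈ Z := (mem_sdiff.mp hzm).1
        have hXe : Z.erase z = X := by
          rw [Finset.erase_eq, ← hz, Finset.sdiff_sdiff_eq_self hXZ]
        refine ⟨z, ⟨hzZ, ?_⟩, hXe⟩
        intro C hC _
        simp only [hF, mem_filter] at hC
        by_contra hzC
        have hle := hXb C hC.1
        have : Z ∩ C ⊆ X ∩ C := by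
          intro b hb
          simp only [mem_inter] at hb ⊢
          refine ⟨?_, hb.2⟩
          rw [← hXe]
          simp only [mem_erase]
          exact ⟨by rintro rfl; exact hzC hb.2, hb.1⟩
        have := Finset.card_le_card this
        omega
      · rintro ⟨z, ⟨hzZ, hz⟩, rfl⟩
        refine ⟨⟨by rw [Finset.card_erase_of_mem hzZ]; omega, ?_⟩, Finset.erase_subset _ _⟩
        intro C hC
        have hle := hZm C hC
        have hs : (Z.erase z) ∩ C ⊆ Z ∩ C := by
          intro b hb; simp at hb ⊢; tauto
        have hs' := Finset.card_le_card hs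
        by_contra hcon
        push Not at hcon
        have hC' : C ∈ F := by simp only [hF, mem_filter]; exact ⟨hC, by omega⟩
        have hzC := hz C hC' hzZ
        have heq := Finset.eq_of_subset_of_card_le hs (by omega)
        have : z ∈ (Z.erase z) ∩ C := by rw [heq]; simp [hzZ, hzC]
        simp at this
    have hPe : P Z = (Z \ F.biUnion (fun C => Z \ C)).card := by
      simp only [hP]
      rw [himg, Finset.card_image_of_injOn]
      intro a ha b hb hab
      have ha' : a ∈ Z := (mem_sdiff.mp (Finset.mem_coe.mp ha)).1
      by_contra hne
      have : a ∈ Z.erase b := by simp [hne, ha']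
      simp only at hab
      rw [← hab] at this
      simp at this
    rw [hPe, Finset.card_sdiff_of_subset hUsub, h7, hZc]
    have hle := Finset.card_le_card hUsub
    rw [h7, hZc] at hle
    have : (i + 1) * m Z = F.card * (i + 1) := by simp only [hm, hF]; ring
    rw [this]
    omega
  -- sum of P
  have hswap : ∀ f : Finset α → ℕ, ∑ Z ∈ 𝒵, P Z * f Z
      = ∑ X ∈ 𝒳, ∑ Z ∈ 𝒵.filter (fun Z => X ⊆ Z), f Z := by
    intro f
    simp_rw [Finset.sum_filter]
    rw [Finset.sum_comm]
    apply Finset.sum_congr rfl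
    intro Z _
    rw [← Finset.sum_filter, Finset.sum_const, smul_eq_mul]
  have hup : ∀ X ∈ 𝒳, ∀ z ∉ X, insert z X ∈ 𝒵 := by
    intro X hX z hz
    simp only [h𝒳, mem_filter, mem_powersetCard, subset_univ, true_and] at hX
    simp only [h𝒵, mem_filter, hPZ, mem_powersetCard, subset_univ, true_and]
    refine ⟨by rw [Finset.card_insert_of_notMem hz]; omega, ?_⟩
    intro C hC
    have := hX.2 C hC
    have hs : (insert z X) ∩ C ⊆ insert z (X ∩ C) := by
      intro b hb; simp at hb ⊢; tauto
    have := (Finset.card_le_card hs).trans (Finset.card_insert_le _ _)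
    omega
  have hsP : ∑ Z ∈ 𝒵, P Z ≤ 𝒳.card * M := by
    have := hswap (fun _ => 1)
    simp only [mul_one] at this
    rw [this, ← smul_eq_mul, ← Finset.sum_const]
    apply Finset.sum_le_sum
    intro X hX
    simp only [h𝒳, mem_filter, mem_powersetCard, subset_univ, true_and] at hX
    rw [Finset.sum_const, smul_eq_mul, mul_one]
    have hc : Xᶜ.card = M := by rw [Finset.card_compl, hX.1, hM]; omega
    rw [← hc]
    refine (Finset.card_le_card ?_).trans (Finset.card_image_le (s := Xᶜ) (f := fun z => insert z X))
    intro Z hZ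
    simp only [h𝒵, hPZ, mem_filter, mem_powersetCard, subset_univ, true_and] at hZ
    have h1 : (Z \ X).card = 1 := by
      rw [Finset.card_sdiff_of_subset hZ.2]; omega
    obtain ⟨z, hz⟩ := Finset.card_eq_one.mp h1
    have hzm : z ∈ Z \ X := by rw [hz]; simp
    simp only [mem_image, mem_compl]
    refine ⟨z, (mem_sdiff.mp hzm).2, ?_⟩
    have := Finset.sdiff_union_of_subset hZ.2
    rw [hz] at this
    rw [← this]; rfl
  have hsPm : 𝒳.card * (y * ((d + 2 * i + 1) * (d + 2 * i)))
      ≤ (∑ Z ∈ 𝒵, P Z * m Z) * (i * (i + 1)) := by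
    rw [hswap, Finset.sum_mul, ← smul_eq_mul, ← Finset.sum_const]
    apply Finset.sum_le_sum
    intro X hX
    have hX' := hX
    simp only [h𝒳, mem_filter, mem_powersetCard, subset_univ, true_and] at hX'
    have hl := bd_lines 𝓑 d i hex hi X hX'.1 hX'.2
    set L := 𝓑.filter (fun C => (X ∩ C).card = d + i) with hL
    have h1 : L.card * y ≤ ∑ Z ∈ 𝒵.filter (fun Z => X ⊆ Z), m Z := by
      have e : ∑ Z ∈ 𝒵.filter (fun Z => X ⊆ Z), m Z
          = ∑ C ∈ 𝓑, ((𝒵.filter (fun Z => X ⊆ Z)).filter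
              (fun Z => (Z ∩ C).card = d + i + 1)).card := by
        simp only [hm]
        simp_rw [Finset.card_filter]
        exact Finset.sum_comm
      rw [e]
      have hsubL : L ⊆ 𝓑 := Finset.filter_subset _ _
      refine le_trans ?_ (Finset.sum_le_sum_of_subset hsubL)
      rw [← smul_eq_mul, ← Finset.sum_const]
      apply Finset.sum_le_sum
      intro C hC
      simp only [hL, mem_filter] at hC
      have c1 := Finset.card_sdiff_add_card_inter C X
      rw [Finset.inter_comm C X, hk C hC.1] at c1
      have c2 : (C \ X).card = y := by omega
      have hinj : Set.InjOn (fun z => insert z X) ((C \ X : Finset α) : Set α) := by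
        intro a ha b hb hab
        have ha' := (mem_sdiff.mp (Finset.mem_coe.mp ha)).2
        have : a ∈ insert b X := by
          have h : a ∈ insert a X := by simp
          simp only at hab
          rwa [hab] at h
        rcases Finset.mem_insert.mp this with h | h
        · exact h
        · exact absurd h ha'
      rw [← c2, ← Finset.card_image_of_injOn hinj]
      apply Finset.card_le_card
      intro Z hZ
      simp only [mem_image, mem_sdiff] at hZ
      obtain ⟨z, ⟨hzC, hzX⟩, rfl⟩ := hZ
      simp only [mem_filter]
      refine ⟨⟨hup X hX z hzX, Finset.subset_insert _ _⟩, ?_⟩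
      rw [Finset.insert_inter_of_mem hzC, Finset.card_insert_of_notMem (by simp [hzX]), hC.2]
    calc y * ((d + 2 * i + 1) * (d + 2 * i)) ≤ y * (L.card * (i * (i + 1))) :=
          Nat.mul_le_mul_left _ hl
      _ = (L.card * y) * (i * (i + 1)) := by ring
      _ ≤ _ := Nat.mul_le_mul_right _ h1
  -- Cauchy-Schwarz
  have hCS : (∑ Z ∈ 𝒵, P Z * m Z) * (∑ Z ∈ 𝒵, m Z)
      ≤ (∑ Z ∈ 𝒵, P Z) * (∑ Z ∈ 𝒵, m Z * m Z) := by
    have a1 : (∑ Z ∈ 𝒵, P Z) + (i + 1) * (∑ Z ∈ 𝒵, m Z) = 𝒵.card * (d + 2 * i + 2) := by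
      rw [Finset.mul_sum, ← Finset.sum_add_distrib, Finset.sum_congr rfl hPm, Finset.sum_const,
        smul_eq_mul]
    have a2 : (∑ Z ∈ 𝒵, P Z * m Z) + (i + 1) * (∑ Z ∈ 𝒵, m Z * m Z)
        = (d + 2 * i + 2) * ∑ Z ∈ 𝒵, m Z := by
      rw [Finset.mul_sum, Finset.mul_sum, ← Finset.sum_add_distrib]
      apply Finset.sum_congr rfl
      intro Z hZ
      rw [← hPm Z hZ]; ring
    have cs := sq_sum_le_card_mul_sum_sq (s := 𝒵) (f := fun Z => (m Z : ℤ))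
    have cs' : ((∑ Z ∈ 𝒵, m Z : ℕ) : ℤ) ^ 2 ≤ (𝒵.card : ℤ) * ((∑ Z ∈ 𝒵, m Z * m Z : ℕ) : ℤ) := by
      push_cast
      refine cs.trans (le_of_eq ?_)
      congr 1
      apply Finset.sum_congr rfl
      intro Z _; ring
    generalize (∑ Z ∈ 𝒵, P Z) = sP at *
    generalize (∑ Z ∈ 𝒵, P Z * m Z) = sPm at *
    generalize (∑ Z ∈ 𝒵, m Z) = s1 at *
    generalize (∑ Z ∈ 𝒵, m Z * m Z) = s2 at *
    zify at a1 a2 ⊢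
    have b1 : (sP : ℤ) = 𝒵.card * (d + 2 * i + 2) - (i + 1) * s1 := by linarith
    have b2 : (sPm : ℤ) = (d + 2 * i + 2) * s1 - (i + 1) * s2 := by linarith
    rw [b1, b2]
    have hpos : (0 : ℤ) ≤ d + 2 * i + 2 := by positivity
    nlinarith [mul_le_mul_of_nonneg_left cs' hpos]
  -- positivity
  have hX₀m : X₀ ∈ 𝒳 := by
    simp only [h𝒳, mem_filter, mem_powersetCard, subset_univ, true_and]
    exact ⟨hX₀, hbad₀⟩
  have hNpos : 0 < 𝒳.card := Finset.card_pos.mpr ⟨X₀, hX₀m⟩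
  have hPmpos : 0 < ∑ Z ∈ 𝒵, P Z * m Z := by
    rcases Nat.eq_zero_or_pos (∑ Z ∈ 𝒵, P Z * m Z) with h | h
    · rw [h, zero_mul] at hsPm
      have : 0 < 𝒳.card * (y * ((d + 2 * i + 1) * (d + 2 * i))) := by positivity
      omega
    · exact h
  have hs1pos : 0 < ∑ Z ∈ 𝒵, m Z := by
    rcases Nat.eq_zero_or_pos (∑ Z ∈ 𝒵, m Z) with h | h
    · exfalso
      have h0 := Finset.sum_eq_zero_iff.mp h
      have : ∑ Z ∈ 𝒵, P Z * m Z = 0 := Finset.sum_eq_zero (fun Z hZ => by rw [h0 Z hZ, mul_zero])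
      omega
    · exact h
  generalize (∑ Z ∈ 𝒵, P Z) = sP at *
  generalize (∑ Z ∈ 𝒵, P Z * m Z) = sPm at *
  generalize (∑ Z ∈ 𝒵, m Z) = s1 at *
  generalize (∑ Z ∈ 𝒵, m Z * m Z) = s2 at *
  set N := 𝒳.card with hN
  set κ := i * (i + 1) with hκ
  set κ' := g * κ + y * ((d + i + 1) * (d + i)) with hκ'
  have hNs : 0 < N * s1 := by positivity
  refine le_of_mul_le_mul_left ?_ hNs
  calc N * s1 * (y * ((d + 2 * i + 1) * (d + 2 * i)) * g)
      = (N * (y * ((d + 2 * i + 1) * (d + 2 * i)))) * (s1 * g) := by ring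
    _ ≤ (sPm * κ) * (s1 * g) := Nat.mul_le_mul_right _ hsPm
    _ = (sPm * s1) * (g * κ) := by ring
    _ ≤ (sP * s2) * (g * κ) := Nat.mul_le_mul_right _ hCS
    _ = sP * (s2 * (g * κ)) := by ring
    _ ≤ sP * (s1 * κ') := Nat.mul_le_mul_left _ hS2
    _ ≤ (N * M) * (s1 * κ') := Nat.mul_le_mul_right _ hsP
    _ = N * s1 * (M * κ') := by ring

/-- The lower order terms at the right endpoint are negative. -/
lemma bd_arith_aux (i y D : ℝ) (hi15 : 15 ≤ i) (hy : 3 ≤ y) (hyi : y < i) (hDi : i ≤ D) :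
    D * (-2 * i * (y + i) * (2 * y + i + 1) - (i - 1) * i * (i + 1) * (y + 1)
          + (i - 1) ^ 2 * y * (y - 1))
        + i * ((i + 1) * (y + i) * (y + 2 * i - 1)) < 0 := by
  obtain ⟨c0, hc0⟩ : ∃ c0, c0 = (i + 1) * (y + i) * (y + 2 * i - 1) := ⟨_, rfl⟩
  obtain ⟨c1, hc1⟩ : ∃ c1, c1 = -2 * i * (y + i) * (2 * y + i + 1)
    - (i - 1) * i * (i + 1) * (y + 1) + (i - 1) ^ 2 * y * (y - 1) := ⟨_, rfl⟩
  rw [← hc0, ← hc1]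
  have hc0p : 0 < c0 := by
    rw [hc0]
    have : 0 < y + 2 * i - 1 := by linarith
    have : 0 < y + i := by linarith
    positivity
  have hs1 : (i - 1) ^ 2 * y * (y - 1) ≤ (i - 1) * i * (i + 1) * (y + 1) := by
    have u1 : (i - 1) * y * (y - 1) ≤ i * (i + 1) * (y + 1) := by
      have v1 : (i - 1) * y ≤ i * (i + 1) := by
        have := mul_le_mul_of_nonneg_left hyi.le (by linarith : 0 ≤ i - 1)
        linarith
      have v2 : y - 1 ≤ y + 1 := by linarith
      exact mul_le_mul v1 v2 (by linarith) (by positivity)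
    have := mul_le_mul_of_nonneg_left u1 (by linarith : 0 ≤ i - 1)
    linarith
  have hs2 : (i + 1) * (y + 2 * i - 1) < 2 * i * (2 * y + i + 1) := by
    have : 0 < i * y := mul_pos (by linarith) (by linarith)
    linarith
  have hs3 := mul_lt_mul_of_pos_left hs2 (by linarith : 0 < y + i)
  have hsum : c1 + c0 < 0 := by rw [hc0, hc1]; linarith
  have hc1n : c1 < 0 := by linarith
  have h1 : D * c1 ≤ i * c1 := mul_le_mul_of_nonpos_right hDi hc1n.le
  have h2 : i * (c1 + c0) < 0 := mul_neg_of_pos_of_neg (by linarith) hsum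
  linarith

set_option maxHeartbeats 1000000 in
/-- The arithmetic core. -/
lemma bd_arith (d e y g : ℝ) (hd : 0 ≤ d) (he : 14 ≤ e) (hy : 3 ≤ y)
    (r1 : (d + 2 * (e + 1)) * y ≤ (e + 1) * (g + y - 1))
    (r2 : (g + 1) * e ≤ (y + 1) * (d + e))
    (r3 : y * ((d + 2 * (e + 1) + 1) * (d + 2 * (e + 1))) * g
      ≤ (g + y - 1) * (g * ((e + 1) * (e + 1 + 1))
        + y * ((d + (e + 1) + 1) * (d + (e + 1))))) :
    0 < (e + 2) * (e + 1 + y) ^ 2 - (3 * e + 2) * e * (e + 1 + y) + 2 * (e + 1) * e ^ 2 := by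
  obtain ⟨i, hi⟩ : ∃ i, i = e + 1 := ⟨_, rfl⟩
  obtain ⟨D, hD⟩ : ∃ D, D = d + i := ⟨_, rfl⟩
  obtain rfl : e = i - 1 := by linarith
  obtain rfl : d = D - i := by linarith
  clear hi hD
  by_contra hcon
  push Not at hcon
  have hi15 : 15 ≤ i := by linarith
  have hDi : i ≤ D := by linarith
  -- Q in the form used below
  have hQt : 8 * i * y - (i + 1) * (y - 1) * (i - y) ≤ 0 := by linarith
  have hyi : y < i := by
    by_contra h
    push Not at h
    have : 0 ≤ (i + 1) * (y - 1) * (y - i) := by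
      apply mul_nonneg (mul_nonneg _ _) <;> linarith
    nlinarith [mul_pos (by linarith : 0 < i) (by linarith : 0 < y)]
  have hA : 0 ≤ i * g - (D * y + i) := by linarith
  have hB : 0 ≤ ((y + 1) * (D - 1) - (i - 1)) - (i - 1) * g := by linarith
  have hG : 0 ≤ i * (i + 1) * g ^ 2 - g * (2 * i * D * y + i * (i + 1))
      + y * (y - 1) * (D * (D + 1)) := by linarith
  -- linear function of g
  obtain ⟨a, ha⟩ : ∃ a, a = -(i - 1) * (2 * i * D * y + i * (i + 1))
    + (i + 1) * (i * ((y + 1) * (D - 1) - (i - 1)) + (i - 1) * (D * y + i)) := ⟨_, rfl⟩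
  obtain ⟨b, hb⟩ : ∃ b, b = (i - 1) * (y * (y - 1) * (D * (D + 1)))
    - (i + 1) * (D * y + i) * ((y + 1) * (D - 1) - (i - 1)) := ⟨_, rfl⟩
  have hlin : 0 ≤ a * g + b := by
    have h1 := mul_nonneg (mul_nonneg (by linarith : 0 ≤ i + 1) hA) hB
    have h2 := mul_nonneg (by linarith : 0 ≤ i - 1) hG
    rw [ha, hb]
    linarith
  have hG0 : a * (D * y + i) + i * b = (i - 1) * (y * (y - i) * D * (D + i)) := by
    rw [ha, hb]; ring
  have hG1 : a * ((y + 1) * (D - 1) - (i - 1)) + (i - 1) * b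
      = (8 * i * y - (i + 1) * (y - 1) * (i - y)) * D ^ 2
        + D * (-2 * i * (y + i) * (2 * y + i + 1) - (i - 1) * i * (i + 1) * (y + 1)
          + (i - 1) ^ 2 * y * (y - 1))
        + i * ((i + 1) * (y + i) * (y + 2 * i - 1)) := by
    rw [ha, hb]; ring
  have hneg0 : a * (D * y + i) + i * b < 0 := by
    rw [hG0]
    have h1 : 0 < (i - 1) * (y * (i - y) * D * (D + i)) := by
      have : 0 < i - 1 := by linarith
      have : 0 < i - y := by linarith
      have : 0 < D := by linarith
      have : 0 < D + i := by linarith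
      have : 0 < y := by linarith
      positivity
    linarith
  have hneg1 : a * ((y + 1) * (D - 1) - (i - 1)) + (i - 1) * b < 0 := by
    rw [hG1]
    have t1 : (8 * i * y - (i + 1) * (y - 1) * (i - y)) * D ^ 2 ≤ 0 :=
      mul_nonpos_of_nonpos_of_nonneg hQt (sq_nonneg D)
    have := bd_arith_aux i y D hi15 hy hyi hDi
    linarith
  rcases le_or_gt 0 a with h | h
  · have h1 := mul_nonneg h hB
    have h2 := mul_nonneg (by linarith : 0 ≤ i - 1) hlin
    linarith
  · have h1 := mul_nonneg (by linarith : 0 ≤ -a) hA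
    have h2 := mul_nonneg (by linarith : 0 ≤ i) hlin
    linarith

/-- From the quadratic inequality to the square root form. -/
lemma bd_real (i x : ℝ) (hi : 15 ≤ i) (hx : i + 3 ≤ x)
    (hQ : 0 < (i + 1) * x ^ 2 - (3 * i - 1) * (i - 1) * x + 2 * i * (i - 1) ^ 2) :
    (i - 1) * (3 * i - 1 + Real.sqrt (i ^ 2 - 14 * i + 1)) / (2 * (i + 1)) < x := by
  rw [div_lt_iff₀ (by linarith)]
  have hS2 : Real.sqrt (i ^ 2 - 14 * i + 1) ^ 2 = i ^ 2 - 14 * i + 1 :=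
    Real.sq_sqrt (by nlinarith)
  have hS0 := Real.sqrt_nonneg (i ^ 2 - 14 * i + 1)
  generalize Real.sqrt (i ^ 2 - 14 * i + 1) = S at *
  have hT0 : 0 ≤ (i - 1) * S := mul_nonneg (by linarith) hS0
  have hT2 : ((i - 1) * S) ^ 2 = (i - 1) ^ 2 * (i ^ 2 - 14 * i + 1) := by rw [mul_pow, hS2]
  have h1 : ((i - 1) * S) ^ 2 < (2 * (i + 1) * x - (3 * i - 1) * (i - 1)) ^ 2 := by
    rw [hT2]
    have := mul_pos (by linarith : 0 < 4 * (i + 1)) hQ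
    linarith
  have h2 : (2 * (i + 1) * (i + 3) - (3 * i - 1) * (i - 1)) ^ 2 < ((i - 1) * S) ^ 2 := by
    rw [hT2]
    have h3 : (i + 1) * (-2 * i ^ 2 + 28 * i + 6) < 0 := by
      have : -2 * i ^ 2 + 28 * i + 6 < 0 := by nlinarith
      exact mul_neg_of_pos_of_neg (by linarith) this
    linarith
  have h4 := abs_lt_of_sq_lt_sq h2 hT0
  rw [abs_lt] at h4
  have h5 : 2 * (i + 1) * (i + 3) ≤ 2 * (i + 1) * x :=
    mul_le_mul_of_nonneg_left hx (by linarith)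
  have h6 : -((i - 1) * S) < 2 * (i + 1) * x - (3 * i - 1) * (i - 1) := by linarith [h4.1]
  by_contra hcon
  push Not at hcon
  have h7 : 2 * (i + 1) * x - (3 * i - 1) * (i - 1) ≤ (i - 1) * S := by linarith
  have := sq_le_sq' h6.le h7
  linarith

/-- **Theorem 5 (2).** Let `𝓑` be a `β(i)` design with parameter `(v, k, d)`, `v ≤ 2k`
and `k - d ≥ i + 3`.  If `𝓑` is not a `β(i+1)` design and `i ≥ 15`, then
`(i-1)(3i - 1 + √(i² - 14i + 1))/(2(i+1)) < k - d ≤ 2i`; in particular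
`2i - 8 ≤ k - d ≤ 2i` if `i ≥ 16`. -/
theorem beta_design_kd_lower' (𝓑 : Finset (Finset α)) (v k d i : ℕ)
    (hB : IsBetaDesign 𝓑 v k d i) (hv : v ≤ 2 * k) (hkd : i + 3 ≤ k - d)
    (hnot : ¬ IsBetaDesign 𝓑 v k d (i + 1)) (hi : 15 ≤ i) :
    (((i : ℝ) - 1) * (3 * (i : ℝ) - 1 + Real.sqrt ((i : ℝ) ^ 2 - 14 * (i : ℝ) + 1))
        / (2 * ((i : ℝ) + 1)) < (k : ℝ) - (d : ℝ)) ∧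
    k - d ≤ 2 * i ∧ (16 ≤ i → 2 * i - 8 ≤ k - d ∧ k - d ≤ 2 * i) := by
  obtain ⟨hD, -, -, hX⟩ := hB
  have hD' := hD
  obtain ⟨hcard, -, hdk, hkv, hk, hd, B₁, hB₁, C₁, hC₁, hne, hBC⟩ := hD
  obtain ⟨y, rfl⟩ : ∃ y, k = d + i + y := ⟨k - d - i, by omega⟩
  have hy : 3 ≤ y := by omega
  have hex : ∀ X : Finset α, X.card = d + 2 * i - 1 → ∃ B ∈ 𝓑, d + i ≤ (X ∩ B).card := by
    intro X h
    obtain ⟨B, hB, -⟩ := hX X h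
    exact ⟨B, hB.1, hB.2⟩
  have hv2 : 2 * (d + i + y) ≤ v + d := by
    have h1 := Finset.card_union_add_card_inter B₁ C₁
    have h2 := Finset.card_le_univ (B₁ ∪ C₁)
    rw [hk _ hB₁, hk _ hC₁, hBC] at h1
    omega
  obtain ⟨g, rfl⟩ : ∃ g, v = (d + i + y) + (i + g) := ⟨v - (d + i + y) - i, by omega⟩
  have hw : ∀ C ∈ 𝓑, Cᶜ.card = i + g := by
    intro C hC
    rw [Finset.card_compl, hk C hC, hcard]; omega
  -- a bad set
  obtain ⟨X₀, hX₀, hbad⟩ : ∃ X₀ : Finset α, X₀.card = d + 2 * i + 1 ∧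
      ∀ C ∈ 𝓑, (X₀ ∩ C).card ≤ d + i := by
    by_contra hcon
    push Not at hcon
    apply hnot
    refine ⟨hD', by omega, by omega, ?_⟩
    intro X hXc
    obtain ⟨C, hC, hc⟩ := hcon X (by omega)
    refine ⟨C, ⟨hC, by omega⟩, ?_⟩
    rintro D ⟨hDm, hDc⟩
    by_contra hDC
    have hle := hd D hDm C hC hDC
    have hu := Finset.card_union_add_card_inter (X ∩ D) (X ∩ C)
    have e1 : ((X ∩ D) ∪ (X ∩ C)).card ≤ X.card := by
      apply Finset.card_le_card; intro z hz; simp at hz; tauto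
    have e2 : ((X ∩ D) ∩ (X ∩ C)).card ≤ (D ∩ C).card := by
      apply Finset.card_le_card; intro z hz; simp at hz ⊢; tauto
    omega
  have hM : X₀ᶜ.card = g + y - 1 := by
    rw [Finset.card_compl, hX₀, hcard]; omega
  have k1 := bd_lower 𝓑 d i y (g + y - 1) hk hd hex (by omega) X₀ hX₀ hM hbad
  have k3 := bd_var 𝓑 d i y g (g + y - 1) hk hd hex (by omega) (by omega) hw
    (by rw [hcard]; omega) X₀ hX₀ hbad
  obtain ⟨e, rfl⟩ : ∃ e, i = e + 1 := ⟨i - 1, by omega⟩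
  have k2 := bd_upper 𝓑 d e y (g + 1) hk hd hex (by omega) B₁ hB₁ (by rw [hw _ hB₁]; omega)
  have hgM : ((g + y - 1 : ℕ) : ℝ) = (g : ℝ) + y - 1 := by
    rw [Nat.cast_sub (by omega)]; push_cast; ring
  have r1 : ((d : ℝ) + 2 * ((e : ℝ) + 1)) * y ≤ ((e : ℝ) + 1) * ((g : ℝ) + y - 1) := by
    rw [← hgM]; exact_mod_cast k1
  have r3 : (y : ℝ) * (((d : ℝ) + 2 * ((e : ℝ) + 1) + 1) * (d + 2 * ((e : ℝ) + 1))) * g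
      ≤ ((g : ℝ) + y - 1) * ((g : ℝ) * (((e : ℝ) + 1) * ((e : ℝ) + 1 + 1))
        + y * (((d : ℝ) + ((e : ℝ) + 1) + 1) * (d + ((e : ℝ) + 1)))) := by
    rw [← hgM]; exact_mod_cast k3
  have r2 : ((g : ℝ) + 1) * e ≤ ((y : ℝ) + 1) * (d + e) := by exact_mod_cast k2
  have hy' : (3 : ℝ) ≤ y := by exact_mod_cast hy
  have he' : (14 : ℝ) ≤ e := by
    have : 14 ≤ e := by omega
    exact_mod_cast this
  have hQ := bd_arith (d : ℝ) e y g (by positivity) he' hy' r1 r2 r3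
  -- upper bound
  have hupp : y < e + 1 := by
    by_contra hcon
    push Not at hcon
    have hg : g ≤ d + y := by omega
    have h1 : (g : ℝ) ≤ d + y := by exact_mod_cast hg
    have h2 : (e : ℝ) + 1 ≤ y := by exact_mod_cast hcon
    have h3 : (0 : ℝ) ≤ d := by positivity
    nlinarith [mul_le_mul_of_nonneg_left h1 (by linarith : (0 : ℝ) ≤ (e : ℝ) + 1),
      mul_le_mul_of_nonneg_left h2 h3]
  have hsub : d + (e + 1) + y - d = e + 1 + y := by omega
  rw [hsub]
  refine ⟨?_, by omega, fun h16 => ⟨?_, by omega⟩⟩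
  · have := bd_real (e + 1 : ℝ) (e + 1 + y : ℝ) (by linarith) (by linarith) (by linarith [hQ])
    push_cast
    have e2 : (d : ℝ) + (e + 1) + y - d = e + 1 + y := by ring
    rw [e2]
    exact this
  · by_contra hcon
    have h1 : y + 8 ≤ e := by omega
    have h1' : (y : ℝ) + 8 ≤ e := by exact_mod_cast h1
    have h16' : (15 : ℝ) ≤ e := by
      have : 15 ≤ e := by omega
      exact_mod_cast this
    nlinarith [mul_nonneg (mul_nonneg (sub_nonneg.mpr h1') (sub_nonneg.mpr hy'))
      (by linarith : (0 : ℝ) ≤ (e : ℝ) + 2), hQ]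
end
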